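/- Let b ∈ ℝ, c < 0, and let m1 > 0 be real. For every integer m ≥ 2 there exist constants C > 0 and δ > 0 such that for all real q with 0 < q < δ, the 2m-th gap length of the operator with potential v(x) = b·q^{m1}·cos 2x + c·q^{2m1}·cos 4x satisfies |γ_{2m}(q) − 8·|Π_{k=1}^{m} ((b/2)² + 8c·(k−1/2)²)|·q^{2m1·m} / (2^{4m}·((2m−1)!)²)| ≤ C·q^{2m1·(m+1)}. -/

import Mathlib

open Real

noncomputable section

/-- `f` is a (possibly zero) solution of `-f'' + v f = λ f` that is `π`-periodic. -/
def IsPerEF (v : ℝ → ℝ) (lam : ℝ) (f : ℝ → ℝ) : Prop :=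
  ContDiff ℝ 2 f ∧ (∀ x, -(deriv (deriv f) x) + v x * f x = lam * f x) ∧
    ∀ x, f (x + Real.pi) = f x

/-- `f` is a (possibly zero) solution of `-f'' + v f = λ f` with `f(x+π) = -f(x)`. -/
def IsSemiEF (v : ℝ → ℝ) (lam : ℝ) (f : ℝ → ℝ) : Prop :=
  ContDiff ℝ 2 f ∧ (∀ x, -(deriv (deriv f) x) + v x * f x = lam * f x) ∧
    ∀ x, f (x + Real.pi) = -f x

/-- Multiplicity of `λ` as a periodic eigenvalue: the dimension of the space of
π-periodic solutions. -/
def perMult (v : ℝ → ℝ) (lam : ℝ) : ℕ :=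
  Module.finrank ℝ (Submodule.span ℝ {f : ℝ → ℝ | IsPerEF v lam f})

/-- Multiplicity of `λ` as a semi-periodic eigenvalue. -/
def semiMult (v : ℝ → ℝ) (lam : ℝ) : ℕ :=
  Module.finrank ℝ (Submodule.span ℝ {f : ℝ → ℝ | IsSemiEF v lam f})

/-- `lamP` enumerates the periodic eigenvalues of `-D² + v` in nondecreasing order
with multiplicity (indices `0, 1, 2, …`). -/
def EnumPer (v : ℝ → ℝ) (lamP : ℕ → ℝ) : Prop :=
  Monotone lamP ∧ (∀ n, ∃ f, f ≠ 0 ∧ IsPerEF v (lamP n) f) ∧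
    ∀ lam : ℝ, Nat.card {n : ℕ // lamP n = lam} = perMult v lam

/-- `lamM` enumerates the semi-periodic eigenvalues of `-D² + v` in nondecreasing order
with multiplicity (indices `1, 2, 3, …`). -/
def EnumSemi (v : ℝ → ℝ) (lamM : ℕ → ℝ) : Prop :=
  MonotoneOn lamM {n : ℕ | 1 ≤ n} ∧ (∀ n, 1 ≤ n → ∃ f, f ≠ 0 ∧ IsSemiEF v (lamM n) f) ∧
    ∀ lam : ℝ, Nat.card {n : ℕ // 1 ≤ n ∧ lamM n = lam} = semiMult v lam

/-- The length of the `n`-th instability interval: `λ_{n+1}^- - λ_n^-` for odd `n`,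
`λ_n^+ - λ_{n-1}^+` for even `n`. -/
def gapLen (lamP lamM : ℕ → ℝ) (n : ℕ) : ℝ :=
  if Odd n then lamM (n + 1) - lamM n else lamP n - lamP (n - 1)

section Aux

/-- three term recurrence -/
def Rec (α : ℤ → ℝ) (s μ : ℝ) (c : ℤ → ℝ) : Prop :=
  ∀ k : ℤ, (μ - 4 * (k : ℝ) ^ 2) * c k = s * (α k * c (k - 1) + α (-k) * c (k + 1))

/-- linear growth -/
def Grow (α : ℤ → ℝ) (A : ℝ) : Prop := 0 < A ∧ ∀ k : ℤ, |α k| ≤ A * (1 + |(k : ℝ)|)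

lemma int_sq_gap (k : ℤ) (j : ℕ) (hk : k ≠ j) (hk' : k ≠ -j) :
    |(k : ℝ)| + j ≤ |(k : ℝ) ^ 2 - (j : ℝ) ^ 2| ∧ (1 : ℝ) ≤ |(k : ℝ)| + j ∧
      (1 : ℝ) ≤ |(k : ℝ)| + j ∧ (1 : ℝ) ≤ |(|(k : ℝ)| - j)| := by
  have h1 : |(k : ℝ) ^ 2 - (j : ℝ) ^ 2| = |(|(k : ℝ)| - j)| * (|(k : ℝ)| + j) := by
    rw [← sq_abs (k : ℝ), sq_sub_sq, abs_mul, mul_comm]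
    congr 1
    exact abs_of_nonneg (by positivity)
  have hne : |k| - (j : ℤ) ≠ 0 := by
    intro h
    rcases abs_choice k with h' | h' <;> omega
  have h2 : (1 : ℤ) ≤ |(|k| - (j : ℤ))| := Int.one_le_abs hne
  have h2' : (1 : ℝ) ≤ |(|(k : ℝ)| - j)| := by exact_mod_cast h2
  have h3 : (1 : ℤ) ≤ |k| + j := by
    rcases abs_choice k with h' | h' <;> have := abs_nonneg k <;> omega
  have h3' : (1 : ℝ) ≤ |(k : ℝ)| + j := by exact_mod_cast h3
  refine ⟨?_, h3', h3', h2'⟩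
  rw [h1]; nlinarith

lemma denom_lower (k : ℤ) (j : ℕ) (hk : k ≠ j) (hk' : k ≠ -j) (μ : ℝ)
    (hμ : |μ - 4 * (j : ℝ) ^ 2| ≤ 1) :
    1 + |(k : ℝ)| ≤ |μ - 4 * (k : ℝ) ^ 2| ∧
    (1 + |(k : ℝ)|) ^ 2 ≤ (2 + j) * |μ - 4 * (k : ℝ) ^ 2| := by
  obtain ⟨h1, h2, -, h4⟩ := int_sq_gap k j hk hk'
  have hj : (0 : ℝ) ≤ j := Nat.cast_nonneg j
  have hk0 := abs_nonneg (k : ℝ)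
  have h5 : 4 * |(k : ℝ) ^ 2 - (j : ℝ) ^ 2| - 1 ≤ |μ - 4 * (k : ℝ) ^ 2| := by
    have : 4 * |(k : ℝ) ^ 2 - (j : ℝ) ^ 2| = |(μ - 4 * (j : ℝ) ^ 2) - (μ - 4 * (k : ℝ) ^ 2)| := by
      rw [show (μ - 4 * (j : ℝ) ^ 2) - (μ - 4 * (k : ℝ) ^ 2) = 4 * ((k : ℝ) ^ 2 - (j : ℝ) ^ 2) by ring,
        abs_mul]; norm_num
    have := abs_sub (μ - 4 * (j : ℝ) ^ 2) (μ - 4 * (k : ℝ) ^ 2)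
    linarith
  refine ⟨by linarith, ?_⟩
  have h6 : |(k : ℝ) ^ 2 - (j : ℝ) ^ 2| = |(|(k : ℝ)| - j)| * (|(k : ℝ)| + j) := by
    rw [← sq_abs (k : ℝ), sq_sub_sq, abs_mul, mul_comm]
    congr 1
    exact abs_of_nonneg (by positivity)
  set t := |(|(k : ℝ)| - j)| with ht
  have h7 : |(k : ℝ)| - j ≤ t := le_abs_self _
  have h8 : 1 + |(k : ℝ)| ≤ (2 + j) * t := by nlinarith
  have h9 : 1 + |(k : ℝ)| ≤ 2 * (|(k : ℝ)| + j) := by linarith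
  have h10 : (1 + |(k : ℝ)|) ^ 2 ≤ ((2 + j) * t) * (2 * (|(k : ℝ)| + j)) := by
    rw [sq]; exact mul_le_mul h8 h9 (by positivity) (by positivity)
  rw [h6] at h5
  have h11 : 1 ≤ t * (|(k : ℝ)| + j) := by nlinarith
  have : 2 * (t * (|(k : ℝ)| + j)) ≤ |μ - 4 * (k : ℝ) ^ 2| := by linarith
  nlinarith

lemma rhs_bound {α : ℤ → ℝ} {A s : ℝ} (hα : Grow α A) (hs : 0 ≤ s) (k : ℤ) {x y B : ℝ}
    (hx : |x| ≤ B) (hy : |y| ≤ B) :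
    |s * (α k * x + α (-k) * y)| ≤ 2 * A * s * (1 + |(k : ℝ)|) * B := by
  obtain ⟨hA, hg⟩ := hα
  have h1 := hg k
  have h2 := hg (-k)
  rw [show |((-k : ℤ) : ℝ)| = |(k : ℝ)| by push_cast; exact abs_neg _] at h2
  have hB : 0 ≤ B := (abs_nonneg x).trans hx
  rw [abs_mul, abs_of_nonneg hs]
  have h3 : |α k * x| ≤ A * (1 + |(k : ℝ)|) * B := by
    rw [abs_mul]; exact mul_le_mul h1 hx (abs_nonneg _) (by positivity)
  have h4 : |α (-k) * y| ≤ A * (1 + |(k : ℝ)|) * B := by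
    rw [abs_mul]; exact mul_le_mul h2 hy (abs_nonneg _) (by positivity)
  have h5 := abs_add_le (α k * x) (α (-k) * y)
  have : s * |α k * x + α (-k) * y| ≤ s * (2 * (A * (1 + |(k : ℝ)|) * B)) :=
    mul_le_mul_of_nonneg_left (by linarith) hs
  linarith

/-- in window j, a bounded solution is dominated by the central coefficient -/
lemma dom_center {α : ℤ → ℝ} {A s μ : ℝ} (hα : Grow α A) (hs : 0 ≤ s) (j : ℕ)
    (hsm : 8 * A * s * (1 + j) ≤ 1) (hμ : |μ - 4 * (j : ℝ) ^ 2| ≤ 1) {c : ℤ → ℝ}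
    (hc : Rec α s μ c) {σ : ℝ} (hσ : |σ| = 1) (hsym : ∀ k, c (-k) = σ * c k)
    (hb : ∃ B, ∀ k, |c k| ≤ B) : ∀ k, |c k| ≤ |c j| := by
  obtain ⟨B, hB⟩ := hb
  have hbdd : BddAbove (Set.range fun k => |c k|) := ⟨B, by rintro _ ⟨k, rfl⟩; exact hB k⟩
  set M := ⨆ k, |c k| with hM
  have hle : ∀ k, |c k| ≤ M := fun k => le_ciSup hbdd k
  have hM0 : 0 ≤ M := (abs_nonneg _).trans (hle 0)
  have hA := hα.1
  have hj : (0 : ℝ) ≤ j := Nat.cast_nonneg j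
  have hAs : 0 ≤ A * s := by positivity
  have h2 : 2 * A * s ≤ 1 / 4 := by nlinarith
  have key : ∀ k, |c k| ≤ max |c j| (M / 4) := by
    intro k
    by_cases h1 : k = j
    · rw [h1]; exact le_max_left _ _
    by_cases h1' : k = -j
    · rw [h1', hsym, abs_mul, hσ, one_mul]; exact le_max_left _ _
    refine le_trans ?_ (le_max_right _ _)
    have hd := (denom_lower k j h1 h1' μ hμ).1
    have h3 := rhs_bound hα hs k (hle (k - 1)) (hle (k + 1))
    rw [← hc k, abs_mul] at h3
    have hk0 := abs_nonneg (k : ℝ)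
    have h4 : (1 + |(k : ℝ)|) * |c k| ≤ (1 + |(k : ℝ)|) * (M / 4) := by
      calc (1 + |(k : ℝ)|) * |c k| ≤ |μ - 4 * (k : ℝ) ^ 2| * |c k| :=
            mul_le_mul_of_nonneg_right hd (abs_nonneg _)
        _ ≤ 2 * A * s * (1 + |(k : ℝ)|) * M := h3
        _ = (2 * A * s) * ((1 + |(k : ℝ)|) * M) := by ring
        _ ≤ 1 / 4 * ((1 + |(k : ℝ)|) * M) := mul_le_mul_of_nonneg_right h2 (by positivity)
        _ = _ := by ring
    exact le_of_mul_le_mul_left h4 (by positivity)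
  have hMle : M ≤ max |c j| (M / 4) := ciSup_le key
  intro k
  rcases le_max_iff.1 hMle with h | h
  · exact (hle k).trans h
  · have : M ≤ 0 := by linarith
    exact (hle k).trans (this.trans (abs_nonneg _))

/-- no bounded solutions off the windows -/
lemma off_window {α : ℤ → ℝ} {A s μ : ℝ} (hα : Grow α A) (hs : 0 ≤ s) (m : ℕ)
    (hsm : 8 * A * s * (1 + m) ≤ 1) (hμm : μ ≤ 4 * (m : ℝ) ^ 2 + 1)
    (hμ : ∀ j : ℕ, j ≤ m → 1 < |μ - 4 * (j : ℝ) ^ 2|) {c : ℤ → ℝ}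
    (hc : Rec α s μ c) (hb : ∃ B, ∀ k, |c k| ≤ B) : ∀ k, c k = 0 := by
  obtain ⟨B, hB⟩ := hb
  have hbdd : BddAbove (Set.range fun k => |c k|) := ⟨B, by rintro _ ⟨k, rfl⟩; exact hB k⟩
  set M := ⨆ k, |c k| with hM
  have hle : ∀ k, |c k| ≤ M := fun k => le_ciSup hbdd k
  have hM0 : 0 ≤ M := (abs_nonneg _).trans (hle 0)
  have hA := hα.1
  have hm : (0 : ℝ) ≤ m := Nat.cast_nonneg m
  have key : ∀ k, |c k| ≤ M / 4 := by
    intro k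
    have hk0 := abs_nonneg (k : ℝ)
    have hd : 1 + |(k : ℝ)| ≤ (1 + m) * |μ - 4 * (k : ℝ) ^ 2| := by
      by_cases hkm : k.natAbs ≤ m
      · have h1 := hμ _ hkm
        have h2 : ((k.natAbs : ℕ) : ℝ) = |(k : ℝ)| := by
          rw [← Int.cast_abs, Int.abs_eq_natAbs]; simp
        rw [h2, sq_abs] at h1
        have h3 : |(k : ℝ)| ≤ m := by rw [← h2]; exact_mod_cast hkm
        nlinarith
      · have h2 : ((k.natAbs : ℕ) : ℝ) = |(k : ℝ)| := by
          rw [← Int.cast_abs, Int.abs_eq_natAbs]; simp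
        have h3 : (m : ℝ) + 1 ≤ |(k : ℝ)| := by rw [← h2]; push Not at hkm; exact_mod_cast hkm
        have h4 : 4 * (k : ℝ) ^ 2 - μ ≤ |μ - 4 * (k : ℝ) ^ 2| := by
          rw [abs_sub_comm]; exact le_abs_self _
        rw [← sq_abs (k : ℝ)] at h4 ⊢
        have h5 : 1 + |(k : ℝ)| ≤ |μ - 4 * |(k : ℝ)| ^ 2| := by nlinarith
        nlinarith
    have h3 := rhs_bound hα hs k (hle (k - 1)) (hle (k + 1))
    rw [← hc k, abs_mul] at h3
    have h4 : (1 + |(k : ℝ)|) * |c k| ≤ (1 + |(k : ℝ)|) * (M / 4) := by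
      calc (1 + |(k : ℝ)|) * |c k| ≤ (1 + m) * |μ - 4 * (k : ℝ) ^ 2| * |c k| :=
            mul_le_mul_of_nonneg_right hd (abs_nonneg _)
        _ = (1 + m) * (|μ - 4 * (k : ℝ) ^ 2| * |c k|) := by ring
        _ ≤ (1 + m) * (2 * A * s * (1 + |(k : ℝ)|) * M) :=
            mul_le_mul_of_nonneg_left h3 (by positivity)
        _ = (8 * A * s * (1 + m)) * ((1 + |(k : ℝ)|) * (M / 4)) := by ring
        _ ≤ 1 * ((1 + |(k : ℝ)|) * (M / 4)) := mul_le_mul_of_nonneg_right hsm (by positivity)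
        _ = _ := by ring
    exact le_of_mul_le_mul_left h4 (by positivity)
  have hMle : M ≤ M / 4 := ciSup_le key
  intro k
  have : |c k| ≤ 0 := (hle k).trans (by linarith)
  exact abs_nonpos_iff.1 this

/-- eigenvalue as function of the sequence -/
def muOf (α : ℤ → ℝ) (s : ℝ) (j : ℕ) (c : ℤ → ℝ) : ℝ :=
  4 * (j : ℝ) ^ 2 + s * (α j * c (j - 1) + α (-j) * c (j + 1))

/-- fixed point map -/
def TMap (α : ℤ → ℝ) (s : ℝ) (j : ℕ) (σ : ℝ) (c : ℤ → ℝ) (k : ℤ) : ℝ :=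
  if k = j then 1 else if k = -j then σ else
    s * (α k * c (k - 1) + α (-k) * c (k + 1)) / (muOf α s j c - 4 * (k : ℝ) ^ 2)

lemma muOf_bound {α : ℤ → ℝ} {A s : ℝ} (hα : Grow α A) (hs : 0 ≤ s) (j : ℕ)
    (hsm : 8 * A * s * (1 + j) ≤ 1) {c : ℤ → ℝ} (hb : ∀ k, |c k| ≤ 1) :
    |muOf α s j c - 4 * (j : ℝ) ^ 2| ≤ 1 := by
  have := rhs_bound hα hs j (hb (j - 1)) (hb (j + 1))
  rw [muOf, add_sub_cancel_left]
  refine this.trans ?_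
  have : |((j : ℤ) : ℝ)| = j := by simp
  rw [this]; have := hα.1
  have hj : (0 : ℝ) ≤ j := Nat.cast_nonneg j
  have : 0 ≤ A * s * (1 + j) := by positivity
  linarith

lemma TMap_bound {α : ℤ → ℝ} {A s : ℝ} (hα : Grow α A) (hs : 0 ≤ s) (j : ℕ)
    (hsm : 8 * A * s * (1 + j) ≤ 1) {σ : ℝ} (hσ : |σ| = 1) {c : ℤ → ℝ} (hb : ∀ k, |c k| ≤ 1)
    (k : ℤ) : |TMap α s j σ c k| ≤ 1 := by
  unfold TMap
  split_ifs with h1 h2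
  · simp
  · exact hσ.le
  have hd := (denom_lower k j h1 h2 _ (muOf_bound hα hs j hsm hb)).1
  have h3 := rhs_bound hα hs k (hb (k - 1)) (hb (k + 1))
  have hk0 := abs_nonneg (k : ℝ)
  rw [abs_div, div_le_one (by linarith)]
  refine h3.trans (le_trans ?_ hd)
  have := hα.1
  have hj : (0 : ℝ) ≤ j := Nat.cast_nonneg j
  have h5 : 0 ≤ A * s := by positivity
  have h6 : 2 * A * s ≤ 1 := by nlinarith
  nlinarith

lemma TMap_lip {α : ℤ → ℝ} {A s : ℝ} (hα : Grow α A) (hs : 0 ≤ s) (j : ℕ)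
    (hsm : 8 * A * s * (1 + j) ≤ 1) {σ : ℝ} {c c' : ℤ → ℝ} (hb : ∀ k, |c k| ≤ 1)
    (hb' : ∀ k, |c' k| ≤ 1) {B : ℝ} (hB : ∀ k, |c k - c' k| ≤ B)
    (k : ℤ) : |TMap α s j σ c k - TMap α s j σ c' k| ≤ B / 2 := by
  have hB0 : 0 ≤ B := (abs_nonneg _).trans (hB 0)
  unfold TMap
  split_ifs with h1 h2
  · simp only [sub_self, abs_zero]; linarith
  · simp only [sub_self, abs_zero]; linarith
  have hm := muOf_bound hα hs j hsm hb
  have hm' := muOf_bound hα hs j hsm hb'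
  have hd := (denom_lower k j h1 h2 _ hm).1
  have hd' := (denom_lower k j h1 h2 _ hm').1
  have hk0 := abs_nonneg (k : ℝ)
  set D := muOf α s j c - 4 * (k : ℝ) ^ 2 with hD
  set D' := muOf α s j c' - 4 * (k : ℝ) ^ 2 with hD'
  have hDD : |D' - D| ≤ B / 4 := by
    have := rhs_bound hα hs j (hB (j - 1)) (hB (j + 1))
    have e : D - D' = s * (α j * (c (j - 1) - c' (j - 1)) + α (-j) * (c (j + 1) - c' (j + 1))) := by
      rw [hD, hD']; unfold muOf; ring
    rw [abs_sub_comm, e]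
    refine this.trans ?_
    have e2 : |((j : ℤ) : ℝ)| = j := by simp
    rw [e2]
    nlinarith
  set x := s * (α k * c (k - 1) + α (-k) * c (k + 1)) with hx
  set x' := s * (α k * c' (k - 1) + α (-k) * c' (k + 1)) with hx'
  have hA := hα.1
  have hj : (0 : ℝ) ≤ j := Nat.cast_nonneg j
  have h5 : 0 ≤ A * s := by positivity
  have h6 : 2 * A * s ≤ 1 / 4 := by nlinarith
  have hxx : |x - x'| ≤ 1 / 4 * (1 + |(k : ℝ)|) * B := by
    have := rhs_bound hα hs k (hB (k - 1)) (hB (k + 1))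
    have e : x - x' = s * (α k * (c (k - 1) - c' (k - 1)) + α (-k) * (c (k + 1) - c' (k + 1))) := by
      rw [hx, hx']; ring
    rw [e]
    refine this.trans ?_
    have : 0 ≤ (1 + |(k : ℝ)|) * B := by positivity
    nlinarith
  have hx1 : |x'| ≤ 1 / 4 * (1 + |(k : ℝ)|) := by
    have := rhs_bound hα hs k (hb' (k - 1)) (hb' (k + 1))
    nlinarith
  have hD0 : D ≠ 0 := by rw [← abs_pos]; linarith
  have hD0' : D' ≠ 0 := by rw [← abs_pos]; linarith
  have e : x / D - x' / D' = (x - x') / D + x' * (D' - D) / (D * D') := by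
    field_simp; ring
  rw [e]
  have t1 : |(x - x') / D| ≤ B / 4 := by
    rw [abs_div, div_le_iff₀ (abs_pos.2 hD0)]
    refine hxx.trans ?_
    nlinarith
  have t2 : |x' * (D' - D) / (D * D')| ≤ B / 4 := by
    rw [abs_div, abs_mul x' (D' - D), abs_mul D D', div_le_iff₀ (by positivity)]
    have : |x'| * |D' - D| ≤ (1 / 4 * (1 + |(k : ℝ)|)) * (B / 4) :=
      mul_le_mul hx1 hDD (abs_nonneg _) (by positivity)
    have h7 : (1 + |(k : ℝ)|) * 1 ≤ |D| * |D'| := mul_le_mul hd (by linarith) (by norm_num) (by positivity)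
    nlinarith
  calc _ ≤ _ := abs_add_le _ _
    _ ≤ B / 2 := by linarith

lemma TMap_sym {α : ℤ → ℝ} {s : ℝ} (j : ℕ) {σ : ℝ} (hσ : σ * σ = 1) (hjσ : j = 0 → σ = 1)
    {c : ℤ → ℝ} (hc : ∀ k, c (-k) = σ * c k) (k : ℤ) :
    TMap α s j σ c (-k) = σ * TMap α s j σ c k := by
  unfold TMap
  by_cases h1 : k = j
  · by_cases h0 : j = 0
    · subst h0; simp [h1, hjσ rfl]
    · have : -k ≠ j := by omega
      rw [if_neg this, if_pos (by omega), if_pos h1, mul_one]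
  by_cases h2 : k = -j
  · rw [if_pos (by omega), if_neg h1, if_pos h2, hσ]
  · rw [if_neg (by omega), if_neg (by omega), if_neg h1, if_neg h2]
    rw [show -k - 1 = -(k + 1) by ring, show -k + 1 = -(k - 1) by ring, hc, hc, neg_neg]
    push_cast; rw [neg_sq]; ring

lemma TMap_tendsto {α : ℤ → ℝ} {A s : ℝ} (hα : Grow α A) (hs : 0 ≤ s) (j : ℕ)
    (hsm : 8 * A * s * (1 + j) ≤ 1) {σ : ℝ} {c : ℤ → ℝ} (hb : ∀ k, |c k| ≤ 1)
    {u : ℕ → ℤ → ℝ} (hu : ∀ k, Filter.Tendsto (fun n => u n k) Filter.atTop (nhds (c k))) (k : ℤ) :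
    Filter.Tendsto (fun n => TMap α s j σ (u n) k) Filter.atTop (nhds (TMap α s j σ c k)) := by
  unfold TMap
  split_ifs with h1 h2
  · exact tendsto_const_nhds
  · exact tendsto_const_nhds
  have hm := muOf_bound hα hs j hsm hb
  have hd := (denom_lower k j h1 h2 _ hm).1
  have hk0 := abs_nonneg (k : ℝ)
  have h0 : muOf α s j c - 4 * (k : ℝ) ^ 2 ≠ 0 := by rw [← abs_pos]; linarith
  refine Filter.Tendsto.div ?_ ?_ h0
  · exact (((hu _).const_mul _).add ((hu _).const_mul _)).const_mul _
  · unfold muOf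
    exact (((((hu _).const_mul _).add ((hu _).const_mul _)).const_mul _).const_add _).sub_const _

lemma exists_sol {α : ℤ → ℝ} {A s : ℝ} (hα : Grow α A) (hs : 0 ≤ s) (j : ℕ)
    (hsm : 8 * A * s * (1 + j) ≤ 1) {σ : ℝ} (hσ : σ * σ = 1) (hjσ : j = 0 → σ = 1) :
    ∃ (μ : ℝ) (c : ℤ → ℝ), |μ - 4 * (j : ℝ) ^ 2| ≤ 1 ∧ Rec α s μ c ∧ c j = 1 ∧
      (∀ k, c (-k) = σ * c k) ∧ (∀ k, |c k| ≤ 1) := by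
  have hσ1 : |σ| = 1 := by
    have : |σ| * |σ| = 1 := by rw [← abs_mul, hσ, abs_one]
    nlinarith [abs_nonneg σ]
  set T := TMap α s j σ with hT
  set u : ℕ → ℤ → ℝ := fun n => T^[n] (fun _ => 0) with hu
  have hus : ∀ n, u (n + 1) = T (u n) := fun n => Function.iterate_succ_apply' T n _
  have hub : ∀ n k, |u n k| ≤ 1 := by
    intro n
    induction n with
    | zero => intro k; simp [hu]
    | succ n ih => intro k; rw [hus]; exact TMap_bound hα hs j hsm hσ1 ih k
  have husym : ∀ n k, u n (-k) = σ * u n k := by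
    intro n
    induction n with
    | zero => intro k; simp [hu]
    | succ n ih => intro k; rw [hus]; exact TMap_sym j hσ hjσ ih k
  have hdiff : ∀ n k, |u n k - u (n + 1) k| ≤ 2 / 2 / 2 ^ n := by
    intro n
    induction n with
    | zero => intro k; have := hub 1 k; simpa [hu] using this
    | succ n ih =>
      intro k
      have := TMap_lip hα hs j hsm (σ := σ) (hub n) (hub (n + 1)) ih k
      rw [hus (n + 1)]
      nth_rewrite 1 [hus n]
      refine this.trans (le_of_eq ?_)
      rw [pow_succ]; field_simp
  have hex : ∀ k, ∃ l, Filter.Tendsto (fun n => u n k) Filter.atTop (nhds l) := by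
    intro k
    refine cauchySeq_tendsto_of_complete (cauchySeq_of_le_geometric_two (C := 2) (fun n => ?_))
    rw [Real.dist_eq]; exact hdiff n k
  choose c hc using hex
  have hcb : ∀ k, |c k| ≤ 1 := fun k =>
    le_of_tendsto (hc k).abs (Filter.Eventually.of_forall fun n => hub n k)
  have hfix : ∀ k, T c k = c k := by
    intro k
    refine tendsto_nhds_unique (TMap_tendsto hα hs j hsm (σ := σ) hcb hc k) ?_
    have := (hc k).comp (Filter.tendsto_add_atTop_nat 1)
    refine this.congr fun n => ?_
    simp only [Function.comp, hus]; rfl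
  have hsym : ∀ k, c (-k) = σ * c k := by
    intro k
    refine tendsto_nhds_unique (hc (-k)) ?_
    refine ((hc k).const_mul σ).congr fun n => (husym n k).symm
  have hcj : c j = 1 := by rw [← hfix]; simp [hT, TMap]
  refine ⟨muOf α s j c, c, muOf_bound hα hs j hsm hcb, ?_, hcj, hsym, hcb⟩
  have hj : (muOf α s j c - 4 * ((j : ℤ) : ℝ) ^ 2) * c j
      = s * (α j * c (j - 1) + α (-j) * c (j + 1)) := by
    rw [hcj]; unfold muOf; push_cast; ring
  intro k
  by_cases h1 : k = j
  · rw [h1]; exact hj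
  by_cases h2 : k = -j
  · rw [h2, hsym, show -(j : ℤ) - 1 = -(j + 1) by ring, show -(j : ℤ) + 1 = -(j - 1) by ring, hsym,
      hsym, neg_neg]
    push_cast at hj ⊢
    linear_combination σ * hj
  have hm := muOf_bound hα hs j hsm hcb
  have hd := (denom_lower k j h1 h2 _ hm).1
  have hk0 := abs_nonneg (k : ℝ)
  have h0 : muOf α s j c - 4 * (k : ℝ) ^ 2 ≠ 0 := by rw [← abs_pos]; linarith
  have := hfix k
  rw [hT, TMap, if_neg h1, if_neg h2, div_eq_iff h0] at this
  linarith

lemma sol_fixed {α : ℤ → ℝ} {s μ : ℝ} (j : ℕ)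
    (hμ : |μ - 4 * (j : ℝ) ^ 2| ≤ 1) {c : ℤ → ℝ}
    (hc : Rec α s μ c) {σ : ℝ} (hsym : ∀ k, c (-k) = σ * c k)
    (hcj : c j = 1) : μ = muOf α s j c ∧ ∀ k, TMap α s j σ c k = c k := by
  have hm : μ = muOf α s j c := by
    have := hc j
    rw [hcj] at this; unfold muOf; push_cast at this; linarith
  refine ⟨hm, fun k => ?_⟩
  unfold TMap
  split_ifs with h1 h2
  · rw [h1, hcj]
  · rw [h2, hsym, hcj, mul_one]
  have hd := (denom_lower k j h1 h2 _ hμ).1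
  have hk0 := abs_nonneg (k : ℝ)
  have h0 : μ - 4 * (k : ℝ) ^ 2 ≠ 0 := by rw [← abs_pos]; linarith
  rw [← hm, div_eq_iff h0, mul_comm (c k)]; exact (hc k).symm

lemma unique_sol {α : ℤ → ℝ} {A s μ μ' : ℝ} (hα : Grow α A) (hs : 0 ≤ s) (j : ℕ)
    (hsm : 8 * A * s * (1 + j) ≤ 1) (hμ : |μ - 4 * (j : ℝ) ^ 2| ≤ 1)
    (hμ' : |μ' - 4 * (j : ℝ) ^ 2| ≤ 1) {c c' : ℤ → ℝ}
    (hc : Rec α s μ c) (hc' : Rec α s μ' c') {σ : ℝ}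
    (hsym : ∀ k, c (-k) = σ * c k) (hsym' : ∀ k, c' (-k) = σ * c' k)
    (hb : ∀ k, |c k| ≤ 1) (hb' : ∀ k, |c' k| ≤ 1) (hcj : c j = 1) (hcj' : c' j = 1) :
    μ = μ' := by
  obtain ⟨h1, h2⟩ := sol_fixed j hμ hc hsym hcj
  obtain ⟨h1', h2'⟩ := sol_fixed j hμ' hc' hsym' hcj'
  have hbdd : BddAbove (Set.range fun k => |c k - c' k|) :=
    ⟨2, by rintro _ ⟨k, rfl⟩; have := abs_sub (c k) (c' k); have := hb k; have := hb' k; simp only; linarith⟩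
  set M := ⨆ k, |c k - c' k| with hM
  have hle : ∀ k, |c k - c' k| ≤ M := fun k => le_ciSup hbdd k
  have hMle : M ≤ M / 2 := ciSup_le fun k => by
    have := TMap_lip hα hs j hsm (σ := σ) hb hb' hle k
    rwa [h2, h2'] at this
  have hcc : c = c' := by
    funext k
    have : |c k - c' k| ≤ 0 := (hle k).trans (by linarith)
    linarith [abs_nonpos_iff.1 this]
  rw [h1, h1', hcc]

lemma sol_small {α : ℤ → ℝ} {A s μ : ℝ} (hα : Grow α A) (hs : 0 ≤ s) (j : ℕ)
    (hμ : |μ - 4 * (j : ℝ) ^ 2| ≤ 1) {c : ℤ → ℝ} (hc : Rec α s μ c)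
    {k : ℤ} (h1 : k ≠ j) (h2 : k ≠ -j) {B : ℝ} (hB1 : |c (k - 1)| ≤ B) (hB2 : |c (k + 1)| ≤ B) :
    |c k| ≤ 2 * A * (2 + j) * s * B / (1 + |(k : ℝ)|) := by
  have hd := (denom_lower k j h1 h2 _ hμ).2
  have h3 := rhs_bound hα hs k hB1 hB2
  rw [← hc k, abs_mul] at h3
  have hk0 := abs_nonneg (k : ℝ)
  have hj : (0 : ℝ) ≤ j := Nat.cast_nonneg j
  rw [le_div_iff₀ (by positivity)]
  have h4 : (1 + |(k : ℝ)|) * (|c k| * (1 + |(k : ℝ)|)) ≤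
      (1 + |(k : ℝ)|) * (2 * A * (2 + j) * s * B) := by
    calc _ = (1 + |(k : ℝ)|) ^ 2 * |c k| := by ring
      _ ≤ (2 + j) * |μ - 4 * (k : ℝ) ^ 2| * |c k| := mul_le_mul_of_nonneg_right hd (abs_nonneg _)
      _ = (2 + j) * (|μ - 4 * (k : ℝ) ^ 2| * |c k|) := by ring
      _ ≤ (2 + j) * (2 * A * s * (1 + |(k : ℝ)|) * B) := mul_le_mul_of_nonneg_left h3 (by positivity)
      _ = _ := by ring
  exact le_of_mul_le_mul_left h4 (by positivity)

lemma decay_step {α : ℤ → ℝ} {A s μ : ℝ} (hα : Grow α A) (hs : 0 ≤ s) (j : ℕ)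
    (hμ : |μ - 4 * (j : ℝ) ^ 2| ≤ 1) {c : ℤ → ℝ} (hc : Rec α s μ c) (p : ℕ)
    (h : ∃ C, 0 ≤ C ∧ ∀ k, |c k| ≤ C / (1 + |(k : ℝ)|) ^ p) :
    ∃ C, 0 ≤ C ∧ ∀ k, |c k| ≤ C / (1 + |(k : ℝ)|) ^ (p + 1) := by
  obtain ⟨C, hC, hb⟩ := h
  have hA := hα.1
  have hj : (0 : ℝ) ≤ j := Nat.cast_nonneg j
  refine ⟨C * (1 + j) + 2 * A * (2 + j) * s * (C * 2 ^ p), by positivity, fun k => ?_⟩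
  have hk0 := abs_nonneg (k : ℝ)
  by_cases h12 : k = j ∨ k = -j
  · have hkj : |(k : ℝ)| = j := by
      rcases h12 with h | h <;> rw [h] <;> simp
    refine (hb k).trans ?_
    rw [hkj, div_le_div_iff₀ (by positivity) (by positivity), pow_succ]
    have : 0 ≤ 2 * A * (2 + j) * s * (C * 2 ^ p) := by positivity
    have h3 : (0 : ℝ) ≤ (1 + j) ^ p := by positivity
    nlinarith [mul_nonneg this h3]
  · push Not at h12
    have hnb : ∀ l : ℤ, |(k : ℝ)| ≤ |(l : ℝ)| + 1 → |c l| ≤ C * 2 ^ p / (1 + |(k : ℝ)|) ^ p := by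
      intro l hl
      refine (hb l).trans ?_
      have hl0 := abs_nonneg (l : ℝ)
      rw [div_le_div_iff₀ (by positivity) (by positivity), mul_assoc, ← mul_pow]
      gcongr
      linarith
    have e1 : |(k : ℝ)| ≤ |((k - 1 : ℤ) : ℝ)| + 1 := by
      push_cast
      have := abs_add_le ((k : ℝ) - 1) 1
      simpa using this
    have e2 : |(k : ℝ)| ≤ |((k + 1 : ℤ) : ℝ)| + 1 := by
      push_cast
      have := abs_sub ((k : ℝ) + 1) 1
      simpa using this
    have := sol_small hα hs j hμ hc h12.1 h12.2 (hnb _ e1) (hnb _ e2)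
    refine this.trans ?_
    rw [pow_succ, mul_div_assoc', div_div]
    gcongr
    have : 0 ≤ C * (1 + j) := by positivity
    linarith

lemma decay_four {α : ℤ → ℝ} {A s μ : ℝ} (hα : Grow α A) (hs : 0 ≤ s) (j : ℕ)
    (hμ : |μ - 4 * (j : ℝ) ^ 2| ≤ 1) {c : ℤ → ℝ} (hc : Rec α s μ c) (hb : ∀ k, |c k| ≤ 1) :
    ∃ C, 0 ≤ C ∧ ∀ k, |c k| ≤ C / (1 + |(k : ℝ)|) ^ 4 := by
  have h0 : ∃ C, 0 ≤ C ∧ ∀ k, |c k| ≤ C / (1 + |(k : ℝ)|) ^ 0 := ⟨1, by norm_num, by simpa using hb⟩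
  have st := decay_step hα hs j hμ hc
  exact st 3 (st 2 (st 1 (st 0 h0)))

/-- normalized solution in window `j` -/
def Sol (α : ℤ → ℝ) (σ s : ℝ) (j : ℕ) (μ : ℝ) (c : ℤ → ℝ) : Prop :=
  |μ - 4 * (j : ℝ) ^ 2| ≤ 1 ∧ Rec α s μ c ∧ c j = 1 ∧
      (∀ k, c (-k) = σ * c k) ∧ (∀ k, |c k| ≤ 1)

open Asymptotics Filter Topology

lemma pow_bigO {a b : ℕ} (h : b ≤ a) :
    (fun s : ℝ => s ^ a) =O[𝓝[>] (0 : ℝ)] (fun s => s ^ b) := by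
  refine IsBigO.of_bound 1 ?_
  have h1 : ∀ᶠ s : ℝ in 𝓝[>] (0 : ℝ), s ≤ 1 :=
    mem_nhdsWithin_of_mem_nhds (Iic_mem_nhds zero_lt_one)
  filter_upwards [self_mem_nhdsWithin, h1] with s hs hs1
  have hs' : (0 : ℝ) < s := hs
  rw [one_mul, Real.norm_of_nonneg (by positivity), Real.norm_of_nonneg (by positivity)]
  exact pow_le_pow_of_le_one hs'.le hs1 h

lemma s_mul_bigO {f : ℝ → ℝ} {n : ℕ} (h : f =O[𝓝[>] (0 : ℝ)] (fun s => s ^ n)) (x : ℝ) :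
    (fun s => s * (x * f s)) =O[𝓝[>] (0 : ℝ)] (fun s => s ^ (n + 1)) := by
  have := (isBigO_refl (fun s : ℝ => s) (𝓝[>] (0 : ℝ))).mul (h.const_mul_left x)
  refine this.congr_right fun s => by ring

lemma asy_bound {α : ℤ → ℝ} {A σ : ℝ} (hα : Grow α A) (m : ℕ) {μ : ℝ → ℝ} {c : ℝ → ℤ → ℝ}
    (hS : ∀ᶠ s in 𝓝[>] (0 : ℝ), Sol α σ s m (μ s) (c s)) (p : ℕ) :
    ∀ k : ℤ, k.natAbs ≤ m →
      (fun s => c s k) =O[𝓝[>] (0 : ℝ)] (fun s => s ^ (min p (m - k.natAbs))) := by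
  induction p with
  | zero =>
    intro k hk
    refine IsBigO.of_bound 1 ?_
    filter_upwards [hS] with s hs
    simpa using hs.2.2.2.2 k
  | succ p ih =>
    intro k hk
    rcases Nat.lt_or_ge k.natAbs m with hlt | hge
    · have h1 := ih (k - 1) (by omega)
      have h2 := ih (k + 1) (by omega)
      have h3 := (s_mul_bigO h1 (α k)).trans
        (pow_bigO (b := min (p + 1) (m - k.natAbs)) (by omega))
      have h4 := (s_mul_bigO h2 (α (-k))).trans
        (pow_bigO (b := min (p + 1) (m - k.natAbs)) (by omega))
      refine IsBigO.trans (IsBigO.of_bound 1 ?_) (h3.add h4)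
      filter_upwards [hS] with s hs
      obtain ⟨hμ, hr, -⟩ := hs
      have hd := (denom_lower k m (by omega) (by omega) _ hμ).1
      have hk0 := abs_nonneg (k : ℝ)
      rw [one_mul, ← mul_add, ← hr k, Real.norm_eq_abs, Real.norm_eq_abs, abs_mul]
      nlinarith [abs_nonneg (c s k)]
    · have : min (p + 1) (m - k.natAbs) = 0 := by omega
      rw [this]
      have := ih k hk
      have e : min p (m - k.natAbs) = 0 := by omega
      rwa [e] at this

lemma asy_bound' {α : ℤ → ℝ} {A σ : ℝ} (hα : Grow α A) (m : ℕ) {μ : ℝ → ℝ} {c : ℝ → ℤ → ℝ}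
    (hS : ∀ᶠ s in 𝓝[>] (0 : ℝ), Sol α σ s m (μ s) (c s)) 
    (k : ℤ) (hk : k.natAbs ≤ m) :
      (fun s => c s k) =O[𝓝[>] (0 : ℝ)] (fun s => s ^ (m - k.natAbs)) := by
  have := asy_bound hα m hS m k hk
  rwa [show min m (m - k.natAbs) = m - k.natAbs by omega] at this

lemma asy_mu {α : ℤ → ℝ} {A σ : ℝ} (hα : Grow α A) (m : ℕ) (hm : 1 ≤ m)
    {μ : ℝ → ℝ} {c : ℝ → ℤ → ℝ}
    (hS : ∀ᶠ s in 𝓝[>] (0 : ℝ), Sol α σ s m (μ s) (c s)) :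
    (fun s => μ s - 4 * (m : ℝ) ^ 2) =O[𝓝[>] (0 : ℝ)] (fun s => s ^ 2) := by
  have hsmall : ∀ k : ℤ, k ≠ m → k ≠ -m → (fun s => c s k) =O[𝓝[>] (0 : ℝ)] (fun s => s ^ 1) := by
    intro k h1 h2
    refine IsBigO.of_bound (2 * A * (2 + m)) ?_
    filter_upwards [hS, self_mem_nhdsWithin] with s hs hs0
    have hs0' : (0 : ℝ) < s := hs0
    obtain ⟨hμ, hr, -, -, hb⟩ := hs
    have := sol_small hα hs0'.le m hμ hr h1 h2 (hb _) (hb _)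
    have hA := hα.1
    rw [Real.norm_eq_abs, pow_one, Real.norm_of_nonneg hs0'.le]
    refine this.trans ?_
    rw [mul_one]
    exact div_le_self (by positivity) (by linarith [abs_nonneg (k : ℝ)])
  have h1 := s_mul_bigO (hsmall (m - 1) (by omega) (by omega)) (α m)
  have h2 := s_mul_bigO (hsmall (m + 1) (by omega) (by omega)) (α (-m))
  refine (h1.add h2).congr' ?_ (EventuallyEq.refl _ _)
  filter_upwards [hS] with s hs
  obtain ⟨hμ, hr, h1, -⟩ := hs
  have := hr m
  rw [h1] at this
  push_cast at this
  linarith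

/-- leading coefficients -/
def Gam (α : ℤ → ℝ) (m : ℕ) : ℕ → ℝ
  | 0 => 1
  | n + 1 => Gam α m n * (α (-((m : ℤ) - n - 1)) / (4 * (m : ℝ) ^ 2 - 4 * ((m : ℝ) - n - 1) ^ 2))

lemma asy_lead {α : ℤ → ℝ} {A σ : ℝ} (hα : Grow α A) (m : ℕ) (hm : 1 ≤ m)
    {μ : ℝ → ℝ} {c : ℝ → ℤ → ℝ}
    (hS : ∀ᶠ s in 𝓝[>] (0 : ℝ), Sol α σ s m (μ s) (c s)) (n : ℕ) (hn : n + 1 ≤ m) :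
    (fun s => c s ((m : ℤ) - n) - Gam α m n * s ^ n) =O[𝓝[>] (0 : ℝ)] (fun s => s ^ (n + 2)) := by
  induction n with
  | zero =>
    refine (isBigO_zero (fun s : ℝ => s ^ (0 + 2)) (𝓝[>] (0 : ℝ))).congr' ?_ (EventuallyEq.refl _ _)
    filter_upwards [hS] with s hs
    simp [Gam, hs.2.2.1]
  | succ n ih =>
    have ih := ih (by omega)
    set k : ℤ := (m : ℤ) - (n + 1 : ℕ) with hk
    have hkr : (k : ℝ) = (m : ℝ) - n - 1 := by rw [hk]; push_cast; ring
    have hk1 : (1 : ℝ) ≤ k := by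
      have : (1 : ℤ) ≤ k := by omega
      exact_mod_cast this
    have hkm : (k : ℝ) + 1 ≤ m := by
      have : k + 1 ≤ (m : ℤ) := by omega
      exact_mod_cast this
    set D := 4 * (m : ℝ) ^ 2 - 4 * (k : ℝ) ^ 2 with hD
    have hD0 : 0 < D := by rw [hD]; nlinarith
    have e1 : (m : ℤ) - n = k + 1 := by rw [hk]; push_cast; ring
    rw [e1] at ih
    have t1 := s_mul_bigO ih (α (-k))
    have t2 := s_mul_bigO (asy_bound' hα m hS (k - 1) (by omega)) (α k)
    have t3 := (asy_mu hα m hm hS).mul (asy_bound' hα m hS k (by omega))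
    have t2' := t2.trans (pow_bigO (b := n + 1 + 2) (by omega))
    have t3' : (fun s => (μ s - 4 * (m : ℝ) ^ 2) * c s k) =O[𝓝[>] (0 : ℝ)]
        (fun s => s ^ (n + 1 + 2)) := by
      refine (t3.congr_right (fun s => (pow_add s 2 _).symm)).trans (pow_bigO (by omega))
    have t1' := t1.trans (pow_bigO (b := n + 1 + 2) (by omega))
    have := ((t1'.add t2').sub t3').const_mul_left D⁻¹
    refine this.congr' ?_ (EventuallyEq.refl _ _)
    filter_upwards [hS] with s hs
    have hr := hs.2.1 k
    have hG : Gam α m (n + 1) = Gam α m n * (α (-k) / D) := by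
      rw [hD, hkr]
      simp only [Gam]
      rw [show (m : ℤ) - n - 1 = k by rw [hk]; push_cast; ring]
    rw [hG]
    field_simp
    rw [hD] at *
    linear_combination -hr

lemma asy_lead0 {α : ℤ → ℝ} {A : ℝ} (hα : Grow α A) (m : ℕ) (hm : 1 ≤ m)
    {μ : ℝ → ℝ} {c : ℝ → ℤ → ℝ}
    (hS : ∀ᶠ s in 𝓝[>] (0 : ℝ), Sol α 1 s m (μ s) (c s)) :
    (fun s => c s 0 - 2 * α 0 * Gam α m (m - 1) / (4 * (m : ℝ) ^ 2) * s ^ m)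
      =O[𝓝[>] (0 : ℝ)] (fun s => s ^ (m + 2)) := by
  have ih := asy_lead hα m hm hS (m - 1) (by omega)
  rw [show (m : ℤ) - ((m - 1 : ℕ) : ℤ) = 1 by omega] at ih
  have t1 := (s_mul_bigO ih (2 * α 0)).trans (pow_bigO (b := m + 2) (by omega))
  have t3 := (asy_mu hα m hm hS).mul (asy_bound' hα m hS 0 (by simp))
  have t3' : (fun s => (μ s - 4 * (m : ℝ) ^ 2) * c s 0) =O[𝓝[>] (0 : ℝ)]
        (fun s => s ^ (m + 2)) := by
      refine (t3.congr_right (fun s => (pow_add s 2 _).symm)).trans (pow_bigO (by simp; omega))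
  have := (t1.sub t3').const_mul_left (4 * (m : ℝ) ^ 2)⁻¹
  refine this.congr' ?_ (EventuallyEq.refl _ _)
  have hm0 : (m : ℝ) ≠ 0 := by positivity
  filter_upwards [hS] with s hs
  have hr := hs.2.1 0
  have hsym := hs.2.2.2.1 1
  simp only [zero_sub, hsym, neg_zero, zero_add, Int.cast_zero] at hr
  have hp : s ^ m = s * s ^ (m - 1) := by
    rw [← pow_succ', show m - 1 + 1 = m by omega]
  rw [hp]
  field_simp
  linear_combination -hr

lemma pairing {α α' : ℤ → ℝ} {A s μ ν : ℝ} (hα : Grow α A) (hα' : Grow α' A) (hs : 0 < s)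
    (hαα : ∀ k, α' k = α (1 - k)) (m : ℕ) (hm : 1 ≤ m) {c d : ℤ → ℝ}
    (hc : Sol α 1 s m μ c) (hd : Sol α' (-1) s m ν d) :
    ∃ S : ℝ, (μ - ν) * S = s * (α 1 * (c 0 * d 1)) ∧
      |S - 1| ≤ (2 * A * (2 + m) * s) ^ 2 * ∑' n : ℕ, 1 / ((n : ℝ) + 1) ^ 2 := by
  obtain ⟨hμ, hr, hcm, hcs, hcb⟩ := hc
  obtain ⟨hν, hr', hdm, hds, hdb⟩ := hd
  obtain ⟨C, hC, hCd⟩ := decay_four hα hs.le m hμ hr hcb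
  have hA := hα.1
  have hd0 : d 0 = 0 := by have := hds 0; simp at this; linarith
  have hsumm2 : Summable (fun n : ℕ => 1 / ((n : ℝ) + 1) ^ 2) := by
    have := (summable_nat_add_iff 1).2 (Real.summable_one_div_nat_pow.2 (le_refl 2))
    simpa using this
  have hcd : ∀ n : ℕ, |c (n + 1)| ≤ C / ((n : ℝ) + 1) ^ 4 := by
    intro n
    refine (hCd _).trans ?_
    push_cast
    rw [abs_of_nonneg (by positivity)]
    exact div_le_div_of_nonneg_left hC (by positivity)
      (pow_le_pow_left₀ (by positivity) (by linarith) 4)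
  have hS : Summable (fun n : ℕ => c (n + 1) * d (n + 1)) := by
    refine Summable.of_norm_bounded (hsumm2.mul_left C) (fun n => ?_)
    rw [Real.norm_eq_abs, abs_mul]
    calc |c (n + 1)| * |d (n + 1)| ≤ C / ((n : ℝ) + 1) ^ 4 * 1 :=
          mul_le_mul (hcd n) (hdb _) (abs_nonneg _) (by positivity)
      _ ≤ C / ((n : ℝ) + 1) ^ 2 := by
          rw [mul_one]
          gcongr
          · linarith [(Nat.cast_nonneg n : (0 : ℝ) ≤ n)]
          · norm_num
      _ = _ := by ring
  have hpart : ∀ N : ℕ, (μ - ν) * ∑ n ∈ Finset.range N, c (n + 1) * d (n + 1) =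
      s * (α 1 * (c 0 * d 1)) +
        s * (α (-N) * (c (N + 1) * d N) - α (N + 1) * (c N * d (N + 1))) := by
    intro N
    induction N with
    | zero => simp [hd0]
    | succ N ih =>
      rw [Finset.sum_range_succ, mul_add, ih]
      have h1 := hr (N + 1)
      have h2 := hr' (N + 1)
      rw [hαα, hαα] at h2
      push_cast at h1 h2 ⊢
      rw [show (1 : ℤ) - (N + 1) = -N by ring, show (1 : ℤ) - -((N : ℤ) + 1) = N + 1 + 1 by ring] at h2
      rw [add_sub_cancel_right] at h1 h2
      linear_combination d (N + 1) * h1 - c (N + 1) * h2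
  have hlim0 : Tendsto (fun N : ℕ => C * (8 * A) / ((N : ℝ) + 1) ) atTop (𝓝 0) :=
    tendsto_const_nhds.div_atTop (tendsto_atTop_add_const_right _ _ tendsto_natCast_atTop_atTop)
  have hNbd : ∀ N : ℕ, |α (-N) * (c (N + 1) * d N) - α (N + 1) * (c N * d (N + 1))| ≤
      C * (8 * A) / ((N : ℝ) + 1) := by
    intro N
    have hN : (0 : ℝ) ≤ N := Nat.cast_nonneg N
    have a1 : |α (-N)| ≤ 2 * A * (N + 1) := by
      refine (hα.2 _).trans ?_
      push_cast
      rw [abs_neg, abs_of_nonneg hN]; nlinarith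
    have a2 : |α (N + 1)| ≤ 2 * A * (N + 1) := by
      refine (hα.2 _).trans ?_
      push_cast
      rw [abs_of_nonneg (by positivity)]; nlinarith
    have b0 : |c N| ≤ C / ((N : ℝ) + 1) ^ 4 := by
      refine (hCd _).trans (le_of_eq ?_)
      push_cast
      rw [abs_of_nonneg hN, add_comm]
    have e1 : |α (-N) * (c (N + 1) * d N)| ≤ (2 * A * (N + 1)) * (C / ((N : ℝ) + 1) ^ 4 * 1) := by
      rw [abs_mul, abs_mul]
      exact mul_le_mul a1 (mul_le_mul (hcd N) (hdb _) (abs_nonneg _) (by positivity))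
        (by positivity) (by positivity)
    have e2 : |α (N + 1) * (c N * d (N + 1))| ≤ (2 * A * (N + 1)) * (C / ((N : ℝ) + 1) ^ 4 * 1) := by
      rw [abs_mul, abs_mul]
      exact mul_le_mul a2 (mul_le_mul b0 (hdb _) (abs_nonneg _) (by positivity))
        (by positivity) (by positivity)
    have e3 : (2 * A * (N + 1)) * (C / ((N : ℝ) + 1) ^ 4 * 1) ≤ C * (4 * A) / ((N : ℝ) + 1) := by
      rw [show (2 * A * (N + 1)) * (C / ((N : ℝ) + 1) ^ 4 * 1) = C * (2 * A) / ((N : ℝ) + 1) ^ 3 by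
        field_simp]
      gcongr
      · norm_num
      · exact le_self_pow₀ (by linarith) (by norm_num)
    have := abs_sub (α (-N) * (c (N + 1) * d N)) (α (N + 1) * (c N * d (N + 1)))
    have e4 : C * (8 * A) / ((N : ℝ) + 1) = C * (4 * A) / ((N : ℝ) + 1) + C * (4 * A) / ((N : ℝ) + 1) := by
      ring
    linarith
  have hlim1 := squeeze_zero_norm (fun N => by rw [Real.norm_eq_abs]; exact hNbd N) hlim0
  refine ⟨∑' n : ℕ, c (n + 1) * d (n + 1), ?_, ?_⟩
  · have l1 := (hS.hasSum.tendsto_sum_nat).const_mul (μ - ν)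
    have l2 := (hlim1.const_mul s).const_add (s * (α 1 * (c 0 * d 1)))
    rw [mul_zero, add_zero] at l2
    exact tendsto_nhds_unique l1 (l2.congr fun N => (hpart N).symm)
  · have hs1 : HasSum (fun n : ℕ => if n = m - 1 then (1 : ℝ) else 0) 1 := hasSum_ite_eq _ _
    have hs2 := hS.hasSum.sub hs1
    rw [← hs2.tsum_eq, ← Real.norm_eq_abs, ← tsum_mul_left]
    refine tsum_of_norm_bounded (hsumm2.mul_left _).hasSum (fun n => ?_)
    split_ifs with h
    · have : ((n : ℤ) + 1) = m := by omega
      rw [this, hcm, hdm]; simp; positivity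
    · have h1 : ((n : ℤ) + 1) ≠ m := by omega
      have h2 : ((n : ℤ) + 1) ≠ -m := by omega
      have b1 := sol_small hα hs.le m hμ hr h1 h2 (hcb _) (hcb _)
      have b2 := sol_small hα' hs.le m hν hr' h1 h2 (hdb _) (hdb _)
      rw [sub_zero, Real.norm_eq_abs, abs_mul]
      push_cast at b1 b2
      have en : |(n : ℝ) + 1| = n + 1 := abs_of_nonneg (by positivity)
      rw [en] at b1 b2
      have hle : ∀ K : ℝ, 0 ≤ K → K / (1 + ((n : ℝ) + 1)) ≤ K / ((n : ℝ) + 1) := by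
        intro K hK; exact div_le_div_of_nonneg_left hK (by positivity) (by linarith)
      have b1' := b1.trans (hle _ (by positivity))
      have b2' := b2.trans (hle _ (by positivity))
      refine (mul_le_mul b1' b2' (abs_nonneg _) (by positivity)).trans (le_of_eq ?_)
      field_simp

theorem gap_asymp {α α' : ℤ → ℝ} {A : ℝ} (hα : Grow α A) (hα' : Grow α' A)
    (hαα : ∀ k, α' k = α (1 - k)) (m : ℕ) (hm : 1 ≤ m) {μ ν : ℝ → ℝ} {c d : ℝ → ℤ → ℝ}
    (hc : ∀ᶠ s in 𝓝[>] (0 : ℝ), Sol α 1 s m (μ s) (c s))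
    (hd : ∀ᶠ s in 𝓝[>] (0 : ℝ), Sol α' (-1) s m (ν s) (d s)) :
    (fun s => (μ s - ν s) - (α 1 * (2 * α 0 * Gam α m (m - 1) / (4 * (m : ℝ) ^ 2))
      * Gam α' m (m - 1)) * s ^ (2 * m))
      =O[𝓝[>] (0 : ℝ)] (fun s => s ^ (2 * m + 2)) := by
  set l := 𝓝[>] (0 : ℝ) with hl
  set g0 := 2 * α 0 * Gam α m (m - 1) / (4 * (m : ℝ) ^ 2) with hg0
  set g1 := Gam α' m (m - 1) with hg1
  have h0 := asy_lead0 hα m hm hc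
  have h1 := asy_lead hα' m hm hd (m - 1) (by omega)
  rw [show (m : ℤ) - ((m - 1 : ℕ) : ℤ) = 1 by omega] at h1
  have hc0 : (fun s => c s 0) =O[l] (fun s => s ^ m) := by
    simpa using asy_bound' hα m hc 0 (by simp)
  have hd1 : (fun s => d s 1) =O[l] (fun s => s ^ (m - 1)) := by
    simpa using asy_bound' hα' m hd 1 (by simpa using hm)
  -- main product
  have hprod : (fun s => s * (α 1 * (c s 0 * d s 1)) - α 1 * g0 * g1 * s ^ (2 * m))
      =O[l] (fun s => s ^ (2 * m + 2)) := by
    have p1 : (fun s => (c s 0 - g0 * s ^ m) * d s 1) =O[l] (fun s => s ^ (2 * m + 1)) := by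
      refine (h0.mul hd1).congr_right fun s => ?_
      rw [← pow_add]; congr 1; omega
    have p2 : (fun s => g0 * s ^ m * (d s 1 - g1 * s ^ (m - 1))) =O[l] (fun s => s ^ (2 * m + 1)) := by
      refine ((((isBigO_refl (fun s : ℝ => s ^ m) l).const_mul_left g0)).mul h1).congr_right fun s => ?_
      rw [← pow_add]; congr 1; omega
    have := s_mul_bigO (p1.add p2) (α 1)
    refine this.congr_left fun s => ?_
    have hp : s ^ (2 * m) = s * (s ^ m * s ^ (m - 1)) := by
      rw [← pow_add, ← pow_succ']; congr 1; omega
    rw [hp]; ring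
  have hprodO : (fun s => s * (α 1 * (c s 0 * d s 1))) =O[l] (fun s => s ^ (2 * m)) := by
    have := s_mul_bigO (n := 2 * m - 1) ((hc0.mul hd1).congr_right fun s => by
      rw [← pow_add]; congr 1; omega) (α 1)
    rwa [show 2 * m - 1 + 1 = 2 * m by omega] at this
  set Z := ∑' n : ℕ, 1 / ((n : ℝ) + 1) ^ 2 with hZ
  set K := (2 * A * (2 + m)) ^ 2 * Z with hK
  have hZ0 : 0 ≤ Z := tsum_nonneg fun n => by positivity
  have hK0 : 0 ≤ K := by positivity
  have hsm : ∀ᶠ s : ℝ in l, K * s ^ 2 ≤ 1 / 2 := by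
    have : Tendsto (fun s : ℝ => K * s ^ 2) l (𝓝 (K * 0 ^ 2)) :=
      ((continuous_const.mul (continuous_pow 2)).tendsto 0).mono_left nhdsWithin_le_nhds
    refine this.eventually_le_const ?_
    norm_num
  have hpair : ∀ᶠ s in l, |(μ s - ν s) - s * (α 1 * (c s 0 * d s 1))| ≤
      2 * K * |s ^ 2 * (s * (α 1 * (c s 0 * d s 1)))| := by
    filter_upwards [hc, hd, hsm, self_mem_nhdsWithin] with s hcs hds hs2 hs
    have hs' : (0 : ℝ) < s := hs
    obtain ⟨S, h1, h2⟩ := pairing hα hα' hs' hαα m hm hcs hds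
    have h2' : |S - 1| ≤ K * s ^ 2 := h2.trans (le_of_eq (by rw [hK]; ring))
    rw [← h1]
    have h3 : |(μ s - ν s)| ≤ 2 * |(μ s - ν s) * S| := by
      rw [abs_mul]
      have : 1 / 2 ≤ |S| := by
        have := abs_sub_abs_le_abs_sub 1 S
        rw [abs_sub_comm, abs_one] at this
        linarith
      nlinarith [abs_nonneg (μ s - ν s)]
    rw [show (μ s - ν s) - (μ s - ν s) * S = -((μ s - ν s) * (S - 1)) by ring, abs_neg, abs_mul,
      abs_mul (s ^ 2), abs_of_nonneg (by positivity : (0 : ℝ) ≤ s ^ 2)]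
    calc |μ s - ν s| * |S - 1| ≤ (2 * |(μ s - ν s) * S|) * (K * s ^ 2) :=
          mul_le_mul h3 h2' (abs_nonneg _) (by positivity)
      _ = _ := by ring
  have hp3 : (fun s => (μ s - ν s) - s * (α 1 * (c s 0 * d s 1))) =O[l]
      (fun s => s ^ (2 * m + 2)) := by
    refine (IsBigO.of_bound (2 * K) (g := fun s => s ^ 2 * (s * (α 1 * (c s 0 * d s 1)))) ?_).trans ?_
    · simpa only [Real.norm_eq_abs] using hpair
    · refine ((isBigO_refl (fun s : ℝ => s ^ 2) l).mul hprodO).congr_right fun s => ?_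
      rw [← pow_add]; congr 1; omega
  refine (hp3.add hprod).congr_left fun s => by ring

lemma Gam_eq (α : ℤ → ℝ) (m : ℕ) (n : ℕ) : Gam α m n = ∏ i ∈ Finset.range n,
    (α (-((m : ℤ) - i - 1)) / (4 * (m : ℝ) ^ 2 - 4 * ((m : ℝ) - i - 1) ^ 2)) := by
  induction n with
  | zero => simp [Gam]
  | succ n ih => rw [Finset.prod_range_succ, ← ih]; rfl

lemma Gam_eq' (α : ℤ → ℝ) (m : ℕ) (hm : 1 ≤ m) : Gam α m (m - 1) = ∏ i ∈ Finset.range (m - 1),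
    (α (-((i : ℤ) + 1)) / (4 * (m : ℝ) ^ 2 - 4 * ((i : ℝ) + 1) ^ 2)) := by
  rw [Gam_eq, ← Finset.prod_range_reflect]
  refine Finset.prod_congr rfl fun i hi => ?_
  have hi' := Finset.mem_range.1 hi
  have e1 : (m : ℤ) - ((m - 1 - 1 - i : ℕ) : ℤ) - 1 = i + 1 := by omega
  have e2 : (m : ℝ) - ((m - 1 - 1 - i : ℕ) : ℝ) - 1 = i + 1 := by exact_mod_cast e1
  rw [e1, e2]

lemma prod_fact (m : ℕ) (hm : 1 ≤ m) :
    (∏ i ∈ Finset.range (m - 1), (4 * (m : ℝ) ^ 2 - 4 * ((i : ℝ) + 1) ^ 2)) * m =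
      4 ^ (m - 1) * ((2 * m - 1).factorial : ℝ) := by
  have h1 : ∏ i ∈ Finset.range (m - 1), ((m : ℝ) - ((i : ℝ) + 1)) = ((m - 1).factorial : ℝ) := by
    rw [← Finset.prod_range_add_one_eq_factorial, ← Finset.prod_range_reflect]
    push_cast
    refine Finset.prod_congr rfl fun i hi => ?_
    have hi' := Finset.mem_range.1 hi
    have e1 : (m : ℤ) - (((m - 1 - 1 - i : ℕ) : ℤ) + 1) = i + 1 := by omega
    exact_mod_cast e1
  have h2 : ∀ n : ℕ, (∏ i ∈ Finset.range n, ((m : ℝ) + ((i : ℝ) + 1))) * (m.factorial : ℝ) =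
      ((m + n).factorial : ℝ) := by
    intro n
    induction n with
    | zero => simp
    | succ n ih =>
      rw [Finset.prod_range_succ, ← add_assoc m n 1, Nat.factorial_succ]
      push_cast
      rw [← ih]; ring
  have h3 : ∏ i ∈ Finset.range (m - 1), (4 * (m : ℝ) ^ 2 - 4 * ((i : ℝ) + 1) ^ 2) =
      4 ^ (m - 1) * ((∏ i ∈ Finset.range (m - 1), ((m : ℝ) - ((i : ℝ) + 1))) *
        ∏ i ∈ Finset.range (m - 1), ((m : ℝ) + ((i : ℝ) + 1))) := by
    rw [← Finset.prod_mul_distrib]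
    have : (4 : ℝ) ^ (m - 1) = ∏ i ∈ Finset.range (m - 1), (4 : ℝ) := by simp
    rw [this, ← Finset.prod_mul_distrib]
    exact Finset.prod_congr rfl fun i _ => by ring
  have h4 := h2 (m - 1)
  rw [show m + (m - 1) = 2 * m - 1 by omega] at h4
  have h5 : (m.factorial : ℝ) = m * ((m - 1).factorial : ℝ) := by
    exact_mod_cast (Nat.mul_factorial_pred (by omega)).symm
  rw [h3, h1, ← h4, h5]; ring

lemma lead_const (α α' : ℤ → ℝ) (hαα : ∀ k, α' k = α (1 - k)) (m : ℕ) (hm : 1 ≤ m) :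
    α 1 * (2 * α 0 * Gam α m (m - 1) / (4 * (m : ℝ) ^ 2)) * Gam α' m (m - 1) =
      8 * (∏ k ∈ Finset.Icc 1 m, (α k * α (1 - k))) /
        (2 ^ (4 * m) * (((2 * m - 1).factorial : ℝ)) ^ 2) := by
  obtain ⟨n, rfl⟩ : ∃ n, m = n + 1 := ⟨m - 1, by omega⟩
  have hP := prod_fact (n + 1) hm
  rw [Gam_eq' _ _ hm, Gam_eq' _ _ hm]
  simp only [Finset.prod_div_distrib]
  have e0 : ∏ k ∈ Finset.Icc 1 (n + 1), (α k * α (1 - k)) =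
      α 1 * α 0 * ((∏ i ∈ Finset.range n, α (-((i : ℤ) + 1))) *
        ∏ i ∈ Finset.range n, α' (-((i : ℤ) + 1))) := by
    rw [← Finset.prod_mul_distrib, Finset.range_eq_Ico, ← Finset.Ico_add_one_right_eq_Icc,
      Finset.prod_eq_prod_Ico_succ_bot (by omega)]
    congr 1
    · rw [Finset.prod_Ico_eq_prod_range, Finset.prod_Ico_eq_prod_range]
      refine Finset.prod_congr (by congr 1) fun i _ => ?_
      rw [hαα, mul_comm]
      push_cast
      congr 2 <;> ring
  rw [e0]
  simp only [Nat.add_sub_cancel] at hP ⊢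
  set P := ∏ i ∈ Finset.range n, (4 * ((n + 1 : ℕ) : ℝ) ^ 2 - 4 * ((i : ℝ) + 1) ^ 2) with hPd
  set F := ((2 * (n + 1) - 1).factorial : ℝ) with hF
  have hF0 : F ≠ 0 := by rw [hF]; positivity
  have hm0 : ((n + 1 : ℕ) : ℝ) ≠ 0 := by positivity
  have hP0 : P ≠ 0 := by
    intro h; rw [h, zero_mul] at hP
    have : (4 : ℝ) ^ n * F ≠ 0 := by positivity
    exact this hP.symm
  have hF' : F = P * ((n + 1 : ℕ) : ℝ) / 4 ^ n := by
    rw [hP]; field_simp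
  have h16 : (2 : ℝ) ^ (4 * (n + 1)) = 16 * (4 ^ n) ^ 2 := by
    rw [← pow_mul, show (4 : ℝ) = 2 ^ 2 by norm_num, ← pow_mul, show 4 * (n + 1) = 2 * (n * 2) + 4 by ring, pow_add]
    norm_num; ring
  rw [hF', h16]
  field_simp
  ring

lemma contDiff_two_mk {f f1 f2 : ℝ → ℝ} (h1 : ∀ x, HasDerivAt f (f1 x) x)
    (h2 : ∀ x, HasDerivAt f1 (f2 x) x) (hc : Continuous f2) :
    ContDiff ℝ 2 f ∧ deriv f = f1 ∧ deriv (deriv f) = f2 := by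
  have e1 : deriv f = f1 := funext fun x => (h1 x).deriv
  have e2 : deriv f1 = f2 := funext fun x => (h2 x).deriv
  refine ⟨?_, e1, by rw [e1, e2]⟩
  rw [show (2 : WithTop ℕ∞) = 1 + 1 by norm_num, contDiff_succ_iff_deriv]
  refine ⟨fun x => (h1 x).differentiableAt, by simp, ?_⟩
  rw [e1, show (1 : WithTop ℕ∞) = 0 + 1 by norm_num, contDiff_succ_iff_deriv]
  refine ⟨fun x => (h2 x).differentiableAt, by simp, ?_⟩
  rw [e2]; exact contDiff_zero.2 hc

lemma contDiff_two_dest {f : ℝ → ℝ} (h : ContDiff ℝ 2 f) :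
    (∀ x, HasDerivAt f (deriv f x) x) ∧ (∀ x, HasDerivAt (deriv f) (deriv (deriv f) x) x) ∧
      Continuous (deriv (deriv f)) := by
  have h1 := h
  rw [show (2 : WithTop ℕ∞) = 1 + 1 by norm_num, contDiff_succ_iff_deriv] at h1
  have h2 := h1.2.2
  rw [show (1 : WithTop ℕ∞) = 0 + 1 by norm_num, contDiff_succ_iff_deriv] at h2
  exact ⟨fun x => (h1.1 x).hasDerivAt, fun x => (h2.1 x).hasDerivAt, contDiff_zero.1 h2.2.2⟩

/-- the potential -/
def pot (b β s x : ℝ) : ℝ := b * s * cos (2 * x) - 2 * (β * s) ^ 2 * cos (4 * x)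

/-- Fourier modes -/
def phi (θ : ℝ) (k : ℤ) (x : ℝ) : ℝ := cos (2 * k * x - θ)

/-- exponential factor -/
def expf (β x : ℝ) : ℝ := exp (-β * cos (2 * x))

/-- recurrence coefficients -/
def alpha (b β : ℝ) (k : ℤ) : ℝ := b / 2 + 4 * β * ((k : ℝ) - 1 / 2)

lemma expf_conj (β : ℝ) {G G1 G2 : ℝ → ℝ} (h1 : ∀ x, HasDerivAt G (G1 x) x)
    (h2 : ∀ x, HasDerivAt G1 (G2 x) x) :
    (∀ x, HasDerivAt (fun x => expf β x * G x) (expf β x * (2 * β * sin (2 * x) * G x + G1 x)) x) ∧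
    (∀ x, HasDerivAt (fun x => expf β x * (2 * β * sin (2 * x) * G x + G1 x))
      (expf β x * ((4 * β * cos (2 * x) + 4 * β ^ 2 * sin (2 * x) ^ 2) * G x +
        4 * β * sin (2 * x) * G1 x + G2 x)) x) := by
  have h2x : ∀ x : ℝ, HasDerivAt (fun x : ℝ => 2 * x) 2 x := fun x => by
    simpa using (hasDerivAt_id x).const_mul (2 : ℝ)
  have hE : ∀ x, HasDerivAt (expf β) (expf β x * (2 * β * sin (2 * x))) x := by
    intro x
    have := (((h2x x).cos).const_mul (-β)).exp
    exact HasDerivAt.congr_deriv (f := expf β) this (by unfold expf; ring)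
  constructor
  · intro x
    exact HasDerivAt.congr_deriv (f := fun x => expf β x * G x) ((hE x).mul (h1 x)) (by ring)
  · intro x
    have hs := ((h2x x).sin).const_mul (2 * β)
    exact HasDerivAt.congr_deriv (f := fun x => expf β x * (2 * β * sin (2 * x) * G x + G1 x))
      ((hE x).mul ((hs.mul (h1 x)).add (h2 x))) (by
        ring)

lemma phi_deriv (θ : ℝ) (k : ℤ) (x : ℝ) :
    HasDerivAt (phi θ k) (-(2 * k * sin (2 * k * x - θ))) x ∧
    HasDerivAt (fun x => -(2 * k * sin (2 * k * x - θ))) (-(4 * (k : ℝ) ^ 2 * phi θ k x)) x := by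
  have h : HasDerivAt (fun x : ℝ => 2 * k * x - θ) (2 * k) x := by
    simpa using ((hasDerivAt_id x).const_mul (2 * (k : ℝ))).sub_const θ
  constructor
  · exact HasDerivAt.congr_deriv (f := phi θ k) h.cos (by ring)
  · exact HasDerivAt.congr_deriv (f := fun x : ℝ => -(2 * k * sin (2 * k * x - θ)))
      ((h.sin).const_mul (2 * (k : ℝ))).neg (by unfold phi; ring)

lemma phi_key (b β s θ : ℝ) (k : ℤ) (x : ℝ) :
    -((4 * (β * s) * cos (2 * x) + 4 * (β * s) ^ 2 * sin (2 * x) ^ 2) * phi θ k x +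
        4 * (β * s) * sin (2 * x) * (-(2 * k * sin (2 * k * x - θ))) + (-(4 * (k : ℝ) ^ 2 * phi θ k x)))
      + pot b β s x * phi θ k x =
    (4 * (k : ℝ) ^ 2 - 2 * (β * s) ^ 2) * phi θ k x +
      s * (alpha b β k * phi θ (k - 1) x + alpha b β (-k) * phi θ (k + 1) x) := by
  have e1 : phi θ (k - 1) x = cos ((2 * k * x - θ) - 2 * x) := by
    unfold phi; push_cast; congr 1; ring
  have e2 : phi θ (k + 1) x = cos ((2 * k * x - θ) + 2 * x) := by
    unfold phi; push_cast; congr 1; ring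
  have e4 : cos (4 * x) = 1 - 2 * sin (2 * x) ^ 2 := by
    rw [show 4 * x = 2 * (2 * x) by ring, cos_two_mul, cos_sq']; ring
  rw [e1, e2, cos_sub, cos_add, pot, e4]
  unfold phi alpha
  push_cast
  ring

lemma phi_periodic (θ : ℝ) (k : ℤ) (x : ℝ) : phi θ k (x + π) = phi θ k x := by
  unfold phi
  rw [show 2 * (k : ℝ) * (x + π) - θ = (2 * k * x - θ) + k * (2 * π) by ring]
  exact cos_add_int_mul_two_pi _ _

lemma expf_periodic (β x : ℝ) : expf β (x + π) = expf β x := by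
  unfold expf
  rw [show 2 * (x + π) = 2 * x + 2 * π by ring, cos_add_two_pi]

lemma expf_neg (β x : ℝ) : expf β (-x) = expf β x := by
  unfold expf; rw [mul_neg, cos_neg]

lemma expf_cont (β : ℝ) : Continuous (expf β) := by unfold expf; fun_prop

lemma phi_cont (θ : ℝ) (k : ℤ) : Continuous (phi θ k) := by unfold phi; fun_prop

lemma phi_abs (θ : ℝ) (k : ℤ) (x : ℝ) : |phi θ k x| ≤ 1 := abs_cos_le_one _

/-- weighted Fourier coefficients -/
def coef (β θ : ℝ) (f : ℝ → ℝ) (k : ℤ) : ℝ := ∫ x in (0 : ℝ)..π, f x * (expf β x * phi θ k x)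

lemma green {v f ψ ψ1 ψ2 : ℝ → ℝ} {lam : ℝ} (hf : IsPerEF v lam f) (h1 : ∀ x, HasDerivAt ψ (ψ1 x) x)
    (h2 : ∀ x, HasDerivAt ψ1 (ψ2 x) x) (hc : Continuous ψ2) (hp : ψ π = ψ 0) (hp1 : ψ1 π = ψ1 0) :
    ∫ x in (0 : ℝ)..π, f x * (-ψ2 x + v x * ψ x - lam * ψ x) = 0 := by
  obtain ⟨hf2, hode, hper⟩ := hf
  obtain ⟨d1, d2, dc⟩ := contDiff_two_dest hf2
  have hd : ∀ x, HasDerivAt (fun x => deriv f x * ψ x - f x * ψ1 x)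
      (f x * (-ψ2 x + v x * ψ x - lam * ψ x)) x := by
    intro x
    have := hode x
    exact HasDerivAt.congr_deriv (f := fun x => deriv f x * ψ x - f x * ψ1 x)
      (((d2 x).mul (h1 x)).sub ((d1 x).mul (h2 x))) (by linear_combination (-ψ x) * this)
  have hcont : Continuous (fun x => f x * (-ψ2 x + v x * ψ x - lam * ψ x)) := by
    have c1 : Continuous ψ := continuous_iff_continuousAt.2 fun x => (h1 x).continuousAt
    have : (fun x => f x * (-ψ2 x + v x * ψ x - lam * ψ x)) =
        fun x => deriv (deriv f) x * ψ x - f x * ψ2 x := by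
      funext x; have := hode x; linear_combination (ψ x) * this
    rw [this]
    exact (dc.mul c1).sub (hf2.continuous.mul hc)
  rw [intervalIntegral.integral_eq_sub_of_hasDerivAt (fun x _ => hd x)
    (hcont.intervalIntegrable _ _)]
  have p0 : f π = f 0 := by simpa using hper 0
  have p1 : deriv f π = deriv f 0 := by
    have : (fun x => f (x + π)) = f := funext hper
    have h := deriv_comp_add_const f π 0
    rw [this] at h
    simpa using h.symm
  rw [p0, p1, hp, hp1]; ring

lemma coef_rec {b β s lam θ : ℝ} {f : ℝ → ℝ} (hf : IsPerEF (pot b β s) lam f) :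
    Rec (alpha b β) s (lam + 2 * (β * s) ^ 2) (coef (β * s) θ f) := by
  intro k
  obtain ⟨g1, g2⟩ := expf_conj (β * s) (fun x => (phi_deriv θ k x).1) (fun x => (phi_deriv θ k x).2)
  have hE := expf_cont (β * s)
  have hφ := phi_cont θ
  have hfc : Continuous f := hf.1.continuous
  have := green hf g1 g2 (by fun_prop) (by
      have a := expf_periodic (β * s) 0; have b := phi_periodic θ k 0
      rw [zero_add] at a b; rw [a, b]) (by
      have a := expf_periodic (β * s) 0; have b := phi_periodic θ k 0
      rw [zero_add] at a b; rw [a, b]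
      have c1 : sin (2 * π) = sin (2 * 0) := by simp
      have c2 : sin (2 * k * π - θ) = sin (2 * k * 0 - θ) := by
        rw [show 2 * (k : ℝ) * π - θ = (2 * k * 0 - θ) + k * (2 * π) by ring]
        exact sin_add_int_mul_two_pi _ _
      rw [c1, c2])
  have e : ∀ x, f x * (-(expf (β * s) x * ((4 * (β * s) * cos (2 * x) + 4 * (β * s) ^ 2 * sin (2 * x) ^ 2) * phi θ k x +
        4 * (β * s) * sin (2 * x) * (-(2 * k * sin (2 * k * x - θ))) + (-(4 * (k : ℝ) ^ 2 * phi θ k x)))) +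
        pot b β s x * (expf (β * s) x * phi θ k x) - lam * (expf (β * s) x * phi θ k x)) =
      (4 * (k : ℝ) ^ 2 - 2 * (β * s) ^ 2 - lam) * (f x * (expf (β * s) x * phi θ k x)) +
      (s * alpha b β k * (f x * (expf (β * s) x * phi θ (k - 1) x)) +
        s * alpha b β (-k) * (f x * (expf (β * s) x * phi θ (k + 1) x))) := by
    intro x
    linear_combination (f x * expf (β * s) x) * phi_key b β s θ k x
  simp only [e] at this
  have hi : ∀ (r : ℝ) (k : ℤ), IntervalIntegrable
      (fun x => r * (f x * (expf (β * s) x * phi θ k x))) MeasureTheory.volume 0 π := by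
    intro r k
    exact (continuous_const.mul (hfc.mul (hE.mul (hφ k)))).intervalIntegrable _ _
  rw [intervalIntegral.integral_add (hi _ _) ((hi _ _).add (hi _ _)),
    intervalIntegral.integral_add (hi _ _) (hi _ _)] at this
  simp only [intervalIntegral.integral_const_mul] at this
  unfold coef
  linear_combination -this

lemma coef_bdd {β θ : ℝ} {f : ℝ → ℝ} (hf : Continuous f) : ∃ B, ∀ k, |coef β θ f k| ≤ B := by
  refine ⟨∫ x in (0 : ℝ)..π, |f x| * expf β x, fun k => ?_⟩
  unfold coef
  have hE := expf_cont β
  have hφ := phi_cont θ k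
  refine (intervalIntegral.abs_integral_le_integral_abs pi_pos.le).trans ?_
  refine intervalIntegral.integral_mono_on pi_pos.le
    (Continuous.intervalIntegrable (by fun_prop) _ _) (Continuous.intervalIntegrable (by fun_prop) _ _)
    fun x _ => ?_
  have h0 : 0 < expf β x := exp_pos _
  rw [abs_mul, abs_mul, abs_of_pos h0]
  have := phi_abs θ k x
  exact mul_le_mul_of_nonneg_left (by nlinarith) (abs_nonneg _)

/-- the two sectors -/
def Sector (θ σ : ℝ) : Prop := (θ = 0 ∧ σ = 1) ∨ (θ = π / 2 ∧ σ = -1)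

lemma phi_sym {θ σ : ℝ} (h : Sector θ σ) (k : ℤ) (x : ℝ) :
    phi θ (-k) x = σ * phi θ k x ∧ phi θ k (-x) = σ * phi θ k x := by
  unfold phi
  rcases h with ⟨rfl, rfl⟩ | ⟨rfl, rfl⟩
  · push_cast
    constructor
    · rw [← cos_neg]; simp
    · rw [← cos_neg]; simp
  · push_cast
    rw [cos_sub_pi_div_two, cos_sub_pi_div_two, cos_sub_pi_div_two]
    constructor
    · rw [show 2 * -(k : ℝ) * x = -(2 * k * x) by ring, sin_neg]; ring
    · rw [show 2 * (k : ℝ) * -x = -(2 * k * x) by ring, sin_neg]; ring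

lemma coef_sym {β θ σ : ℝ} (h : Sector θ σ) (f : ℝ → ℝ) (k : ℤ) :
    coef β θ f (-k) = σ * coef β θ f k := by
  unfold coef
  rw [← intervalIntegral.integral_const_mul]
  congr 1; funext x
  rw [(phi_sym h k x).1]; ring

lemma coef_sub_smul {β θ : ℝ} {f g : ℝ → ℝ} (hf : Continuous f) (hg : Continuous g) (t : ℝ) (k : ℤ) :
    coef β θ (f - t • g) k = coef β θ f k - t * coef β θ g k := by
  unfold coef
  have hE := expf_cont β
  have hφ := phi_cont θ k
  rw [← intervalIntegral.integral_const_mul, ← intervalIntegral.integral_sub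
    (Continuous.intervalIntegrable (by fun_prop) _ _) (Continuous.intervalIntegrable (by fun_prop) _ _)]
  congr 1; funext x
  simp only [Pi.sub_apply, Pi.smul_apply, smul_eq_mul]; ring

lemma fourier_unique {h : ℝ → ℝ} (hc : Continuous h) (hp : ∀ x, h (x + π) = h x)
    (h0 : ∀ k : ℤ, ∫ x in (0 : ℝ)..π, h x * phi 0 k x = 0)
    (h1 : ∀ k : ℤ, ∫ x in (0 : ℝ)..π, h x * phi (π / 2) k x = 0) : ∀ x, h x = 0 := by
  have : Fact (0 < π) := ⟨pi_pos⟩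
  let F0 : ℝ → ℂ := fun x => (h x : ℂ)
  have hper : Function.Periodic F0 π := fun x => by simp [F0, hp x]
  let F : C(AddCircle π, ℂ) := ⟨hper.lift, by
    apply continuous_coinduced_dom.2
    change Continuous F0
    exact Complex.continuous_ofReal.comp hc⟩
  have hF : ∀ x : ℝ, F (x : AddCircle π) = (h x : ℂ) := fun x => rfl
  have hz : ∀ n : ℤ, fourierCoeff F n = 0 := by
    intro n
    rw [fourierCoeff_eq_intervalIntegral F n 0]
    have e : ∀ x : ℝ, fourier (-n) (x : AddCircle π) • F (x : AddCircle π) =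
        ((h x * phi 0 n x : ℝ) : ℂ) + (-Complex.I) * ((h x * phi (π / 2) n x : ℝ) : ℂ) := by
      intro x
      rw [hF, fourier_coe_apply]
      have hπ : (π : ℂ) ≠ 0 := by exact_mod_cast pi_ne_zero
      have : 2 * (π : ℂ) * Complex.I * ((-n : ℤ) : ℂ) * (x : ℂ) / (π : ℂ) =
        ((-(2 * n * x) : ℝ) : ℂ) * Complex.I := by
        push_cast; field_simp
      rw [this, Complex.exp_mul_I, ← Complex.ofReal_cos, ← Complex.ofReal_sin]
      unfold phi
      rw [cos_sub_pi_div_two, sub_zero, cos_neg, sin_neg]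
      push_cast
      rw [smul_eq_mul]; ring
    simp only [e]
    have hφ := phi_cont
    rw [zero_add, intervalIntegral.integral_add]
    · rw [intervalIntegral.integral_const_mul, intervalIntegral.integral_ofReal,
        intervalIntegral.integral_ofReal, h0, h1]; simp
    · exact (Complex.continuous_ofReal.comp (hc.mul (hφ 0 n))).intervalIntegrable _ _
    · exact (continuous_const.mul
        (Complex.continuous_ofReal.comp (hc.mul (hφ (π / 2) n)))).intervalIntegrable _ _
  intro x
  have hs : Summable (fourierCoeff F) := by
    rw [show fourierCoeff F = fun _ => 0 from funext hz]; exact summable_zero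
  have := has_pointwise_sum_fourier_series_of_summable hs (x : AddCircle π)
  simp only [hz, zero_smul] at this
  have h2 := this.unique hasSum_zero
  rw [hF] at h2
  exact_mod_cast h2

lemma integral_flip {h : ℝ → ℝ} (hp : ∀ x, h (x + π) = h x) :
    ∫ x in (0 : ℝ)..π, h (-x) = ∫ x in (0 : ℝ)..π, h x := by
  rw [intervalIntegral.integral_comp_neg]
  have : Function.Periodic h π := hp
  have := this.intervalIntegral_add_eq (-π) 0
  simpa using this

lemma parity_of_zero {θ σ : ℝ} (hS : Sector θ σ) {h : ℝ → ℝ} (hc : Continuous h)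
    (hp : ∀ x, h (x + π) = h x) (h0 : ∀ k : ℤ, ∫ x in (0 : ℝ)..π, h x * phi θ k x = 0) :
    ∀ x, h (-x) = -σ * h x := by
  have hσ : σ * σ = 1 := by rcases hS with ⟨_, rfl⟩ | ⟨_, rfl⟩ <;> norm_num
  have hp' : ∀ x, h (-(x + π)) = h (-x) := fun x => by
    rw [← hp (-(x + π))]; congr 1; ring
  have key : ∀ θ' σ', Sector θ' σ' → ∀ k : ℤ, ∫ x in (0 : ℝ)..π, (h x + σ * h (-x)) * phi θ' k x =
      (1 + σ * σ') * ∫ x in (0 : ℝ)..π, h x * phi θ' k x := by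
    intro θ' σ' hS' k
    have hσ' : σ' * σ' = 1 := by rcases hS' with ⟨_, rfl⟩ | ⟨_, rfl⟩ <;> norm_num
    have hφ := phi_cont θ' k
    have e : ∀ x, (h x + σ * h (-x)) * phi θ' k x =
        h x * phi θ' k x + σ * σ' * (h (-x) * phi θ' k (-x)) := by
      intro x; rw [(phi_sym hS' k x).2]
      linear_combination (-σ * h (-x) * phi θ' k x) * hσ'
    simp only [e]
    rw [intervalIntegral.integral_add (Continuous.intervalIntegrable (by fun_prop) _ _)
      (Continuous.intervalIntegrable (by fun_prop) _ _), intervalIntegral.integral_const_mul,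
      integral_flip (h := fun x => h x * phi θ' k x) (fun x => by
        simp only [hp, phi_periodic])]
    ring
  have hz := fourier_unique (h := fun x => h x + σ * h (-x)) (by fun_prop)
    (fun x => by simp only [hp, hp']) (fun k => by
      rw [key 0 1 (Or.inl ⟨rfl, rfl⟩)]
      rcases hS with ⟨rfl, rfl⟩ | ⟨rfl, rfl⟩
      · rw [h0]; simp
      · norm_num) (fun k => by
      rw [key (π / 2) (-1) (Or.inr ⟨rfl, rfl⟩)]
      rcases hS with ⟨rfl, rfl⟩ | ⟨rfl, rfl⟩
      · norm_num
      · rw [h0]; simp)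
  intro x
  have := hz x
  linear_combination σ * this - h (-x) * hσ

lemma parity_of_coef_zero {β θ σ : ℝ} (hS : Sector θ σ) {f : ℝ → ℝ} (hc : Continuous f)
    (hp : ∀ x, f (x + π) = f x) (h0 : ∀ k : ℤ, coef β θ f k = 0) :
    ∀ x, f (-x) = -σ * f x := by
  have hE := expf_cont β
  have := parity_of_zero hS (h := fun x => f x * expf β x) (by fun_prop)
    (fun x => by simp only [hp, expf_periodic]) (fun k => by
      simp only [mul_assoc]; exact h0 k)
  intro x
  have h1 := this x
  simp only [expf_neg] at h1
  have h2 : expf β x ≠ 0 := (exp_pos _).ne'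
  apply mul_right_cancel₀ h2
  rw [h1]; ring

lemma hasSum_cg {f g : ℤ → ℝ} {a : ℝ} (h : ∀ k, f k = g k) : HasSum f a ↔ HasSum g a := by
  rw [show f = g from funext h]

lemma summable_sq : Summable (fun k : ℤ => 1 / (1 + |(k : ℝ)|) ^ 2) := by
  have h : Summable (fun n : ℕ => 1 / (1 + (n : ℝ)) ^ 2) := by
    have := (summable_nat_add_iff 1).2 (Real.summable_one_div_nat_pow.2 (by norm_num : 1 < 2))
    refine this.congr fun n => ?_
    push_cast; rw [add_comm]
  apply Summable.of_nat_of_neg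
  · refine h.congr fun n => ?_
    simp
  · refine h.congr fun n => ?_
    simp

lemma integral_phi (θ : ℝ) (n : ℤ) :
    ∫ x in (0 : ℝ)..π, phi θ n x = if n = 0 then π * cos θ else 0 := by
  by_cases hn : n = 0
  · subst hn
    simp [phi]
  · rw [if_neg hn]
    have hn' : (2 * (n : ℝ)) ≠ 0 := by
      have : (n : ℝ) ≠ 0 := by exact_mod_cast hn
      positivity
    have hd : ∀ x, HasDerivAt (fun x => sin (2 * n * x - θ) / (2 * n)) (phi θ n x) x := by
      intro x
      have h : HasDerivAt (fun x : ℝ => 2 * n * x - θ) (2 * n) x := by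
        simpa using ((hasDerivAt_id x).const_mul (2 * (n : ℝ))).sub_const θ
      exact HasDerivAt.congr_deriv (f := fun x => sin (2 * n * x - θ) / (2 * n))
        (h.sin.div_const (2 * (n : ℝ))) (by unfold phi; field_simp)
    rw [intervalIntegral.integral_eq_sub_of_hasDerivAt (fun x _ => hd x)
      ((phi_cont θ n).intervalIntegrable _ _)]
    have c2 : sin (2 * n * π - θ) = sin (2 * n * 0 - θ) := by
      rw [show 2 * (n : ℝ) * π - θ = (2 * n * 0 - θ) + n * (2 * π) by ring]
      exact sin_add_int_mul_two_pi _ _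
    rw [c2, sub_self]

lemma integral_phi_mul {θ σ : ℝ} (hS : Sector θ σ) (k j : ℤ) :
    ∫ x in (0 : ℝ)..π, phi θ k x * phi θ j x =
      π / 2 * ((if k = j then 1 else 0) + (if k = -j then σ else 0)) := by
  have hσ : cos (2 * θ) = σ := by
    rcases hS with ⟨rfl, rfl⟩ | ⟨rfl, rfl⟩
    · simp
    · rw [show 2 * (π / 2) = π by ring, cos_pi]
  have e : ∀ x, phi θ k x * phi θ j x =
      (1 / 2) * phi 0 (k - j) x + (1 / 2) * phi (2 * θ) (k + j) x := by
    intro x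
    have e1 : phi 0 (k - j) x = cos ((2 * k * x - θ) - (2 * j * x - θ)) := by
      unfold phi; push_cast; congr 1; ring
    have e2 : phi (2 * θ) (k + j) x = cos ((2 * k * x - θ) + (2 * j * x - θ)) := by
      unfold phi; push_cast; congr 1; ring
    rw [e1, e2, cos_add, cos_sub]; unfold phi; ring
  simp only [e]
  have h1 := phi_cont 0 (k - j)
  have h2 := phi_cont (2 * θ) (k + j)
  rw [intervalIntegral.integral_add (Continuous.intervalIntegrable (by fun_prop) _ _)
    (Continuous.intervalIntegrable (by fun_prop) _ _), intervalIntegral.integral_const_mul,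
    intervalIntegral.integral_const_mul, integral_phi, integral_phi, hσ, cos_zero]
  have a1 : (k - j = 0) ↔ (k = j) := sub_eq_zero
  have a2 : (k + j = 0) ↔ (k = -j) := add_eq_zero_iff_eq_neg
  simp only [a1, a2]
  split_ifs <;> ring

/-- synthesis of an eigenfunction from a decaying solution of the recurrence -/
lemma synth {b β s μ θ σ : ℝ} (hS : Sector θ σ) {c : ℤ → ℝ} (hrec : Rec (alpha b β) s μ c)
    (hsym : ∀ k, c (-k) = σ * c k) {C : ℝ} (hC : 0 ≤ C)
    (hdec : ∀ k : ℤ, |c k| ≤ C / (1 + |(k : ℝ)|) ^ 4) :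
    ∃ f, IsPerEF (pot b β s) (μ - 2 * (β * s) ^ 2) f ∧ (∀ x, f (-x) = σ * f x) ∧
      ∀ j, coef (β * s) θ f j = π * c j := by
  set φ := phi θ with hφ
  set ψ : ℤ → ℝ → ℝ := fun k x => -(2 * k * sin (2 * k * x - θ)) with hψ
  -- basic bounds
  have hdec2 : ∀ (k : ℤ) (w D : ℝ), 0 ≤ D → |w| ≤ D * (1 + |(k : ℝ)|) ^ 2 →
      |c k * w| ≤ C * D * (1 / (1 + |(k : ℝ)|) ^ 2) := by
    intro k w D hD hw
    have h1 : 0 < 1 + |(k : ℝ)| := by positivity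
    rw [abs_mul]
    calc |c k| * |w| ≤ C / (1 + |(k : ℝ)|) ^ 4 * (D * (1 + |(k : ℝ)|) ^ 2) :=
          mul_le_mul (hdec k) hw (abs_nonneg _) (by positivity)
      _ = C * D * (1 / (1 + |(k : ℝ)|) ^ 2) := by field_simp
  have hsumm : ∀ D : ℝ, Summable (fun k : ℤ => C * D * (1 / (1 + |(k : ℝ)|) ^ 2)) :=
    fun D => summable_sq.mul_left _
  have one_le : ∀ k : ℤ, (1 : ℝ) ≤ 1 + |(k : ℝ)| := fun k => by
    have := abs_nonneg (k : ℝ); linarith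
  have b0 : ∀ (k : ℤ) x, |c k * φ k x| ≤ C * 1 * (1 / (1 + |(k : ℝ)|) ^ 2) := by
    intro k x
    refine hdec2 k _ 1 zero_le_one ?_
    have := phi_abs θ k x
    have := one_le_pow₀ (one_le k) (n := 2)
    rw [one_mul]; exact le_trans ‹_› ‹_›
  have b1 : ∀ (k : ℤ) x, |c k * ψ k x| ≤ C * 2 * (1 / (1 + |(k : ℝ)|) ^ 2) := by
    intro k x
    refine hdec2 k _ 2 zero_le_two ?_
    simp only [hψ]
    rw [abs_neg, abs_mul, abs_mul, abs_two]
    have := abs_sin_le_one (2 * k * x - θ)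
    have := one_le k
    have := abs_nonneg (k : ℝ)
    nlinarith [mul_nonneg this (sub_nonneg.2 ‹|sin (2 * k * x - θ)| ≤ 1›)]
  have b2 : ∀ (k : ℤ) x, |c k * (-(4 * (k : ℝ) ^ 2 * φ k x))| ≤ C * 4 * (1 / (1 + |(k : ℝ)|) ^ 2) := by
    intro k x
    refine hdec2 k _ 4 (by norm_num) ?_
    rw [abs_neg, abs_mul, abs_mul, abs_of_nonneg (by norm_num : (0 : ℝ) ≤ 4), abs_pow]
    have := phi_abs θ k x
    have h3 := abs_nonneg (k : ℝ)
    have : |(k : ℝ)| ^ 2 * |φ k x| ≤ |(k : ℝ)| ^ 2 * 1 :=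
      mul_le_mul_of_nonneg_left this (by positivity)
    nlinarith
  have s0 : ∀ x, Summable (fun k : ℤ => c k * φ k x) := fun x =>
    Summable.of_norm_bounded (hsumm 1) (fun k => b0 k x)
  have s1 : ∀ x, Summable (fun k : ℤ => c k * ψ k x) := fun x =>
    Summable.of_norm_bounded (hsumm 2) (fun k => b1 k x)
  have s2 : ∀ x, Summable (fun k : ℤ => c k * (-(4 * (k : ℝ) ^ 2 * φ k x))) := fun x =>
    Summable.of_norm_bounded (hsumm 4) (fun k => b2 k x)
  set G : ℝ → ℝ := fun x => ∑' k, c k * φ k x with hG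
  set G1 : ℝ → ℝ := fun x => ∑' k, c k * ψ k x with hG1
  set G2 : ℝ → ℝ := fun x => ∑' k : ℤ, c k * (-(4 * (k : ℝ) ^ 2 * φ k x)) with hG2
  have d1 : ∀ x, HasDerivAt G (G1 x) x := fun x =>
    hasDerivAt_tsum (hsumm 2) (fun k y => ((phi_deriv θ k y).1).const_mul (c k))
      (fun k y => b1 k y) (s0 0) x
  have d2 : ∀ x, HasDerivAt G1 (G2 x) x := fun x =>
    hasDerivAt_tsum (hsumm 4) (fun k y => ((phi_deriv θ k y).2).const_mul (c k))
      (fun k y => b2 k y) (s1 0) x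
  have c2 : Continuous G2 := by
    refine continuous_tsum (fun k => ?_) (hsumm 4) (fun k y => b2 k y)
    have := phi_cont θ k
    fun_prop
  have c0 : Continuous G := continuous_iff_continuousAt.2 fun x => (d1 x).continuousAt
  have c1 : Continuous G1 := continuous_iff_continuousAt.2 fun x => (d2 x).continuousAt
  -- the equation
  set A : ℝ := |b| + 4 * |β| with hA
  have hA0 : 0 ≤ A := by positivity
  have hαb : ∀ k : ℤ, |alpha b (-β) k| ≤ A * (1 + |(k : ℝ)|) := by
    intro k
    unfold alpha
    have h1 : |b / 2 + 4 * -β * ((k : ℝ) - 1 / 2)| ≤ |b| / 2 + 4 * |β| * (|(k : ℝ)| + 1 / 2) := by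
      refine (abs_add_le _ _).trans ?_
      rw [abs_div, abs_mul, abs_mul, abs_neg, abs_two, abs_of_nonneg (by norm_num : (0 : ℝ) ≤ 4)]
      have : |(k : ℝ) - 1 / 2| ≤ |(k : ℝ)| + 1 / 2 := by
        refine (abs_sub _ _).trans ?_
        norm_num
      have := mul_le_mul_of_nonneg_left this (by positivity : 0 ≤ 4 * |β|)
      linarith
    have h2 := abs_nonneg b
    have h3 := abs_nonneg β
    have h4 := abs_nonneg (k : ℝ)
    refine h1.trans ?_
    rw [hA]
    nlinarith [mul_nonneg h2 h4, mul_nonneg h3 h4]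
  have key : ∀ x, -((4 * (-β * s) * cos (2 * x) + 4 * (-β * s) ^ 2 * sin (2 * x) ^ 2) * G x +
        4 * (-β * s) * sin (2 * x) * G1 x + G2 x) + pot b β s x * G x =
        (μ - 2 * (β * s) ^ 2) * G x := by
    intro x
    have a0 : HasSum (fun k : ℤ => c k * φ k x) (G x) := (s0 x).hasSum
    have a1 : HasSum (fun k : ℤ => c k * ψ k x) (G1 x) := (s1 x).hasSum
    have a2 : HasSum (fun k : ℤ => c k * (-(4 * (k : ℝ) ^ 2 * φ k x))) (G2 x) := (s2 x).hasSum
    have sP : Summable (fun k : ℤ => c k * (alpha b (-β) k * φ (k - 1) x)) := by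
      refine Summable.of_norm_bounded (hsumm A) (fun k => hdec2 k _ A hA0 ?_)
      rw [abs_mul]
      have h1 := phi_abs θ (k - 1) x
      have h2 := hαb k
      have h3 := one_le k
      calc _ ≤ A * (1 + |(k : ℝ)|) * 1 := mul_le_mul h2 h1 (abs_nonneg _) (by positivity)
        _ ≤ _ := by nlinarith [mul_nonneg hA0 (mul_nonneg (by linarith : 0 ≤ 1 + |(k : ℝ)|) (sub_nonneg.2 h3))]
    have sQ : Summable (fun k : ℤ => c k * (alpha b (-β) (-k) * φ (k + 1) x)) := by
      refine Summable.of_norm_bounded (hsumm A) (fun k => hdec2 k _ A hA0 ?_)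
      rw [abs_mul]
      have h1 := phi_abs θ (k + 1) x
      have h2 := hαb (-k)
      rw [Int.cast_neg, abs_neg] at h2
      have h3 := one_le k
      calc _ ≤ A * (1 + |(k : ℝ)|) * 1 := mul_le_mul h2 h1 (abs_nonneg _) (by positivity)
        _ ≤ _ := by nlinarith [mul_nonneg hA0 (mul_nonneg (by linarith : 0 ≤ 1 + |(k : ℝ)|) (sub_nonneg.2 h3))]
    obtain ⟨p, hp⟩ := sP
    obtain ⟨q, hq⟩ := sQ
    have hp' := (Equiv.addRight (1 : ℤ)).hasSum_iff.2 hp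
    have hq' := (Equiv.addRight (-1 : ℤ)).hasSum_iff.2 hq
    have t1 := (((a0.mul_left (4 * (-β * s) * cos (2 * x) + 4 * (-β * s) ^ 2 * sin (2 * x) ^ 2)).add
      (a1.mul_left (4 * (-β * s) * sin (2 * x)))).add a2).neg.add (a0.mul_left (pot b β s x))
    have t2 := ((a2.neg.sub (a0.mul_left (2 * (β * s) ^ 2))).add ((hp.add hq).mul_left s))
    have t3 := ((a2.neg.sub (a0.mul_left (2 * (β * s) ^ 2))).add ((hp'.add hq').mul_left s))
    have t4 := a0.mul_left (μ - 2 * (β * s) ^ 2)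
    have hpot : pot b (-β) s x = pot b β s x := by unfold pot; ring
    have e12 : -((4 * (-β * s) * cos (2 * x) + 4 * (-β * s) ^ 2 * sin (2 * x) ^ 2) * G x +
        4 * (-β * s) * sin (2 * x) * G1 x + G2 x) + pot b β s x * G x = -G2 x - 2 * (β * s) ^ 2 * G x + s * (p + q) := by
      refine t1.unique ((hasSum_cg fun k => ?_).1 t2)
      have := phi_key b (-β) s θ k x
      rw [hpot] at this
      simp only [hψ, hφ]
      linear_combination (-c k) * this
    have e34 : -G2 x - 2 * (β * s) ^ 2 * G x + s * (p + q) = (μ - 2 * (β * s) ^ 2) * G x := by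
      refine t3.unique ((hasSum_cg fun k => ?_).1 t4)
      have := hrec k
      have e1 : k + 1 - 1 = k := by ring
      have e2 : k + -1 + 1 = k := by ring
      have e3 : k + -1 = k - 1 := by ring
      have e4 : alpha b (-β) (k + 1) = alpha b β (-k) := by unfold alpha; push_cast; ring
      have e5 : alpha b (-β) (-(k - 1)) = alpha b β k := by unfold alpha; push_cast; ring
      simp only [Function.comp, Equiv.coe_addRight, e1, e2, e4]
      rw [e3, e5]
      linear_combination (φ k x) * this
    exact e12.trans e34
  obtain ⟨g1, g2⟩ := expf_conj (-β * s) d1 d2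
  have hE := expf_cont (-β * s)
  obtain ⟨k1, k2, k3⟩ := contDiff_two_mk g1 g2 (by fun_prop)
  refine ⟨fun x => expf (-β * s) x * G x, ⟨k1, ?_, ?_⟩, ?_, ?_⟩
  · intro x
    rw [k3]
    linear_combination (expf (-β * s) x) * key x
  · intro x
    have : G (x + π) = G x := by simp only [hG, hφ, phi_periodic]
    simp only [expf_periodic, this]
  · intro x
    have : G (-x) = σ * G x := by
      simp only [hG, hφ]
      rw [← tsum_mul_left]
      congr 1; funext k
      rw [(phi_sym hS k x).2]; ring
    simp only [expf_neg, this]; ring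
  · intro j
    have hσ : σ * σ = 1 := by rcases hS with ⟨_, rfl⟩ | ⟨_, rfl⟩ <;> norm_num
    unfold coef
    have e : ∀ x, expf (-β * s) x * G x * (expf (β * s) x * phi θ j x) = G x * φ j x := by
      intro x
      have : expf (-β * s) x * expf (β * s) x = 1 := by
        unfold expf; rw [← exp_add, ← exp_zero]; congr 1; ring
      linear_combination (G x * phi θ j x) * this
    simp only [e]
    have hs : HasSum (fun k : ℤ => ∫ x in (0 : ℝ)..π, c k * φ k x * φ j x)
        (∫ x in (0 : ℝ)..π, G x * φ j x) := by
      have hcj := phi_cont θ j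
      refine intervalIntegral.hasSum_integral_of_dominated_convergence
        (fun k _ => C * 1 * (1 / (1 + |(k : ℝ)|) ^ 2)) (fun k => ?_) (fun k => ?_) ?_ ?_ ?_
      · have := phi_cont θ k
        exact Continuous.aestronglyMeasurable (by fun_prop)
      · refine Filter.Eventually.of_forall fun x _ => ?_
        rw [norm_mul]
        have h1 := b0 k x
        have h2 := phi_abs θ j x
        calc _ ≤ C * 1 * (1 / (1 + |(k : ℝ)|) ^ 2) * 1 :=
              mul_le_mul h1 h2 (abs_nonneg _) (by positivity)
          _ = _ := mul_one _
      · exact Filter.Eventually.of_forall fun x _ => hsumm 1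
      · exact intervalIntegrable_const
      · exact Filter.Eventually.of_forall fun x _ => ((s0 x).hasSum).mul_right _
    have e2 : ∀ k : ℤ, ∫ x in (0 : ℝ)..π, c k * φ k x * φ j x =
        (if k = j then π / 2 * c k else 0) + (if k = -j then π / 2 * c k * σ else 0) := by
      intro k
      simp only [mul_assoc]
      rw [intervalIntegral.integral_const_mul, integral_phi_mul hS]
      split_ifs <;> ring
    have h3 : HasSum (fun k : ℤ => (if k = j then π / 2 * c k else 0) +
        (if k = -j then π / 2 * c k * σ else 0)) (π / 2 * c j + π / 2 * c (-j) * σ) := by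
      refine HasSum.add ?_ ?_
      · have := hasSum_ite_eq j (π / 2 * c j)
        refine (hasSum_cg fun k => ?_).1 this
        split_ifs with h
        · rw [h]
        · rfl
      · have := hasSum_ite_eq (-j) (π / 2 * c (-j) * σ)
        refine (hasSum_cg fun k => ?_).1 this
        split_ifs with h
        · rw [h]
        · rfl
    simp only [e2] at hs
    rw [hs.unique h3, hsym]
    linear_combination (π / 2 * c j) * hσ

lemma isPerEF_sub_smul {v : ℝ → ℝ} {lam : ℝ} {f g : ℝ → ℝ} (hf : IsPerEF v lam f)
    (hg : IsPerEF v lam g) (t : ℝ) : IsPerEF v lam (f - t • g) := by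
  obtain ⟨f1, f2, f3⟩ := contDiff_two_dest hf.1
  obtain ⟨g1, g2, g3⟩ := contDiff_two_dest hg.1
  obtain ⟨k1, k2, k3⟩ := contDiff_two_mk (f := f - t • g) (f1 := deriv f - t • deriv g)
    (f2 := deriv (deriv f) - t • deriv (deriv g))
    (fun x => (f1 x).sub ((g1 x).const_smul t)) (fun x => (f2 x).sub ((g2 x).const_smul t))
    (f3.sub (continuous_const.smul g3))
  refine ⟨k1, fun x => ?_, fun x => ?_⟩
  · rw [k3]
    simp only [Pi.sub_apply, Pi.smul_apply, smul_eq_mul]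
    linear_combination hf.2.1 x - t * hg.2.1 x
  · simp only [Pi.sub_apply, Pi.smul_apply, smul_eq_mul, hf.2.2 x, hg.2.2 x]

lemma isPerEF_zero (v : ℝ → ℝ) (lam : ℝ) : IsPerEF v lam 0 := by
  refine ⟨contDiff_const, fun x => ?_, fun x => rfl⟩
  have : deriv (0 : ℝ → ℝ) = 0 := by funext x; exact deriv_const x 0
  rw [this, this]; simp

/-- description of the eigenfunctions in one symmetry sector -/
lemma sector_desc {b β s A θ σ lam : ℝ} (hS : Sector θ σ) (hα : Grow (alpha b β) A) (hs : 0 ≤ s)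
    (m : ℕ) (hsm : 8 * A * s * (1 + m) ≤ 1) {M : ℕ → ℝ} {c : ℕ → ℤ → ℝ}
    (hM : ∀ j ≤ m, (j = 0 → σ = 1) → Sol (alpha b β) σ s j (M j) (c j))
    (hlam : lam + 2 * (β * s) ^ 2 ≤ 4 * (m : ℝ) ^ 2 + 1) :
    ∃ g, IsPerEF (pot b β s) lam g ∧ (∀ x, g (-x) = σ * g x) ∧
      (g ≠ 0 ↔ ∃ j ≤ m, (j = 0 → σ = 1) ∧ lam + 2 * (β * s) ^ 2 = M j) ∧
      ∀ f, IsPerEF (pot b β s) lam f → ∃ t : ℝ, ∀ x, (f - t • g) (-x) = -σ * (f - t • g) x := by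
  have hσ : |σ| = 1 := by rcases hS with ⟨_, rfl⟩ | ⟨_, rfl⟩ <;> norm_num
  have hsj : ∀ j ≤ m, 8 * A * s * (1 + (j : ℝ)) ≤ 1 := by
    intro j hj
    have hj' : (j : ℝ) ≤ m := by exact_mod_cast hj
    have := hα.1
    refine le_trans (mul_le_mul_of_nonneg_left (by linarith) (by positivity)) hsm
  by_cases h : ∃ j ≤ m, (j = 0 → σ = 1) ∧ lam + 2 * (β * s) ^ 2 = M j
  · obtain ⟨j, hj, hjσ, hlj⟩ := h
    obtain ⟨w1, w2, w3, w4, w5⟩ := hM j hj hjσ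
    obtain ⟨C, hC, hdec⟩ := decay_four hα hs j w1 w2 w5
    obtain ⟨g, hg, hgp, hgc⟩ := synth hS w2 w4 hC hdec
    have hl : M j - 2 * (β * s) ^ 2 = lam := by linarith
    rw [hl] at hg
    refine ⟨g, hg, hgp, ⟨fun _ => ⟨j, hj, hjσ, hlj⟩, fun _ h0 => ?_⟩, fun f hf => ?_⟩
    · have h1 := hgc j
      rw [w3, mul_one, h0] at h1
      have : coef (β * s) θ 0 j = 0 := by unfold coef; simp
      rw [this] at h1
      exact pi_ne_zero h1.symm
    · set t := coef (β * s) θ f j / π with ht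
      have hr := isPerEF_sub_smul hf hg t
      refine ⟨t, parity_of_coef_zero (β := β * s) hS hr.1.continuous hr.2.2 fun k => ?_⟩
      have hd := dom_center hα hs j (hsj j hj) (by rw [hlj]; exact w1) (coef_rec (θ := θ) hr) hσ
        (coef_sym hS _) (coef_bdd hr.1.continuous) k
      have hz : coef (β * s) θ (f - t • g) j = 0 := by
        rw [coef_sub_smul hf.1.continuous hg.1.continuous, hgc, w3, ht]
        field_simp; ring
      rw [hz, abs_zero] at hd
      exact abs_nonpos_iff.1 hd
  · refine ⟨0, isPerEF_zero _ _, fun x => by simp, ⟨fun h0 => absurd rfl h0, fun h' => absurd h' h⟩,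
      fun f hf => ⟨0, ?_⟩⟩
    rw [zero_smul, sub_zero]
    refine parity_of_coef_zero (β := β * s) hS hf.1.continuous hf.2.2 ?_
    have hrec := coef_rec (θ := θ) hf
    have hbd := coef_bdd (β := β * s) (θ := θ) hf.1.continuous
    have hsy := coef_sym (β := β * s) hS f
    by_cases hw : ∀ j : ℕ, j ≤ m → 1 < |lam + 2 * (β * s) ^ 2 - 4 * (j : ℝ) ^ 2|
    · exact off_window hα hs m hsm hlam hw hrec hbd
    · push Not at hw
      obtain ⟨j, hj, hjw⟩ := hw
      have hd := dom_center hα hs j (hsj j hj) hjw hrec hσ hsy hbd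
      have hz : coef (β * s) θ f j = 0 := by
        by_contra hne
        by_cases hjσ : j = 0 → σ = 1
        · obtain ⟨w1, w2, w3, w4, w5⟩ := hM j hj hjσ
          apply h
          refine ⟨j, hj, hjσ, ?_⟩
          refine unique_sol hα hs j (hsj j hj) hjw w1
            (c := fun k => coef (β * s) θ f k / coef (β * s) θ f j) ?_ w2 (σ := σ) ?_ w4 ?_ w5 ?_ w3
          · intro k
            have := hrec k
            field_simp
            linear_combination this
          · intro k
            simp only [hsy]; ring
          · intro k
            simp only [abs_div]
            exact div_le_one_of_le₀ (hd k) (abs_nonneg _)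
          · exact div_self hne
        · push Not at hjσ
          obtain ⟨rfl, h1⟩ := hjσ
          have h2 : σ = -1 := by
            rcases hS with ⟨_, rfl⟩ | ⟨_, rfl⟩
            · exact absurd rfl h1
            · rfl
          have h3 := hsy 0
          rw [h2, neg_zero] at h3
          apply hne
          simp only [Nat.cast_zero]
          linarith
      intro k
      have := hd k
      rw [hz, abs_zero] at this
      exact abs_nonpos_iff.1 this

open Classical in
lemma perMult_eq {v : ℝ → ℝ} {lam : ℝ} {g h : ℝ → ℝ} (hg : IsPerEF v lam g) (hh : IsPerEF v lam h)
    (pg : ∀ x, g (-x) = 1 * g x) (ph : ∀ x, h (-x) = (-1) * h x)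
    (dg : ∀ f, IsPerEF v lam f → ∃ t : ℝ, ∀ x, (f - t • g) (-x) = -1 * (f - t • g) x)
    (dh : ∀ f, IsPerEF v lam f → ∃ t : ℝ, ∀ x, (f - t • h) (-x) = -(-1) * (f - t • h) x) :
    perMult v lam = (if g ≠ 0 then 1 else 0) + (if h ≠ 0 then 1 else 0) ∧
      ∀ f, IsPerEF v lam f → f ≠ 0 → g ≠ 0 ∨ h ≠ 0 := by
  have dec : ∀ f, IsPerEF v lam f → ∃ t u : ℝ, f = t • g + u • h := by
    intro f hf
    obtain ⟨t, ht⟩ := dg f hf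
    obtain ⟨u, hu⟩ := dh _ (isPerEF_sub_smul hf hg t)
    refine ⟨t, u, funext fun x => ?_⟩
    have h1 := ht x
    have h2 := hu x
    have h3 := ph x
    simp only [Pi.sub_apply, Pi.smul_apply, smul_eq_mul, Pi.add_apply] at h1 h2 h3 ⊢
    rw [h3] at h2
    linear_combination (1 / 2) * h1 - (1 / 2) * h2
  have hspan : Submodule.span ℝ {f : ℝ → ℝ | IsPerEF v lam f} = Submodule.span ℝ {g, h} := by
    apply le_antisymm
    · rw [Submodule.span_le]
      intro f hf
      obtain ⟨t, u, rfl⟩ := dec f hf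
      exact Submodule.mem_span_pair.2 ⟨t, u, rfl⟩
    · rw [Submodule.span_le]
      intro f hf
      apply Submodule.subset_span
      rcases hf with rfl | hf
      · exact hg
      · rw [Set.mem_singleton_iff.1 hf]; exact hh
  constructor
  · unfold perMult
    rw [hspan]
    by_cases g0 : g = 0
    · by_cases h0 : h = 0
      · rw [g0, h0, Submodule.span_insert_zero, Submodule.span_zero_singleton]; simp
      · rw [g0, Submodule.span_insert_zero, finrank_span_singleton h0]
        simp [h0]
    · by_cases h0 : h = 0
      · rw [h0, Set.pair_comm, Submodule.span_insert_zero, finrank_span_singleton g0]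
        simp [g0]
      · have hli : LinearIndependent ℝ ![g, h] := by
          rw [LinearIndependent.pair_iff]
          intro t u htu
          have hp : ∀ x, t * g x = 0 ∧ u * h x = 0 := by
            intro x
            have h1 := congrFun htu x
            have h2 := congrFun htu (-x)
            simp only [Pi.add_apply, Pi.smul_apply, smul_eq_mul, Pi.zero_apply, pg, ph] at h1 h2
            constructor <;> linarith
          obtain ⟨x, hx⟩ := Function.ne_iff.1 g0
          obtain ⟨y, hy⟩ := Function.ne_iff.1 h0
          exact ⟨(mul_eq_zero.1 (hp x).1).resolve_right hx, (mul_eq_zero.1 (hp y).2).resolve_right hy⟩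
        have := finrank_span_eq_card hli
        rw [Matrix.range_cons, Matrix.range_cons, Matrix.range_empty, Set.union_empty] at this
        rw [show ({g, h} : Set (ℝ → ℝ)) = {g} ∪ {h} from rfl, this]
        simp [g0, h0]
  · intro f hf f0
    by_contra hcon
    push Not at hcon
    obtain ⟨t, u, e⟩ := dec f hf
    apply f0
    rw [e, hcon.1, hcon.2]; simp

lemma count_aux {J : Type} [Fintype J] (a : ℕ → ℝ) (L : J → ℝ) (p : ℝ → Prop)
    (h : ∀ v, p v → Nat.card {n // a n = v} = Nat.card {j // L j = v})
    (hex : ∀ n, p (a n) → ∃ j, L j = a n) :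
    {n | p (a n)}.Finite ∧ {n | p (a n)}.ncard = {j | p (L j)}.ncard := by
  classical
  have hfib : ∀ j, p (L j) → {n | a n = L j}.Finite := by
    intro j hj
    by_contra hinf
    have h1 := h _ hj
    have h2 : Nat.card {n // a n = L j} = 0 := Set.Infinite.ncard hinf
    have h3 : 0 < Nat.card {i // L i = L j} := by
      have : Nonempty {i // L i = L j} := ⟨⟨j, rfl⟩⟩
      exact Nat.card_pos
    omega
  have hfin : {n | p (a n)}.Finite := by
    refine ((Set.toFinite {j | p (L j)}).biUnion (t := fun j => {n | a n = L j}) hfib).subset ?_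
    intro n hn
    obtain ⟨j, hj⟩ := hex n hn
    exact Set.mem_biUnion (x := j) (by simpa [hj] using hn) hj.symm
  refine ⟨hfin, ?_⟩
  rw [Set.ncard_eq_toFinset_card _ hfin, Set.ncard_eq_toFinset_card _ (Set.toFinite _)]
  set V : Finset ℝ := (Finset.univ.filter fun j => p (L j)).image L with hV
  rw [Finset.card_eq_sum_card_fiberwise (f := a) (t := V),
    Finset.card_eq_sum_card_fiberwise (f := L) (t := V)]
  · refine Finset.sum_congr rfl fun v hv => ?_
    have hpv : p v := by
      simp only [hV, Finset.mem_image, Finset.mem_filter, Finset.mem_univ, true_and] at hv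
      obtain ⟨j, hj, rfl⟩ := hv
      exact hj
    have := h v hpv
    rw [← Set.ncard_coe_finset, ← Set.ncard_coe_finset]
    have e1 : ((hfin.toFinset.filter fun n => a n = v : Finset ℕ) : Set ℕ) = {n | a n = v} := by
      ext n; simp only [Finset.coe_filter, Set.Finite.mem_toFinset, Set.mem_ofPred_eq]
      exact ⟨fun h => h.2, fun h => ⟨by rw [h]; exact hpv, h⟩⟩
    have e2 : (((Set.toFinite {j | p (L j)}).toFinset.filter fun j => L j = v : Finset J) : Set J) =
        {j | L j = v} := by
      ext n; simp only [Finset.coe_filter, Set.Finite.mem_toFinset, Set.mem_ofPred_eq]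
      exact ⟨fun h => h.2, fun h => ⟨by rw [h]; exact hpv, h⟩⟩
    rw [e1, e2]
    exact this
  · intro j hj
    simp only [Set.Finite.coe_toFinset, Set.mem_ofPred_eq] at hj
    simp only [hV, Finset.coe_image, Finset.coe_filter, Finset.mem_univ, true_and]
    exact ⟨j, hj, rfl⟩
  · intro n hn
    simp only [Set.Finite.coe_toFinset, Set.mem_ofPred_eq] at hn
    obtain ⟨j, hj⟩ := hex n hn
    simp only [hV, Finset.coe_image, Finset.coe_filter, Finset.mem_univ, true_and]
    exact ⟨j, by simpa [hj] using hn, hj⟩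

lemma lower_set {T : Set ℕ} (hT : T.Finite) (hl : ∀ n ∈ T, ∀ k ≤ n, k ∈ T) (n : ℕ) :
    n ∈ T ↔ n < T.ncard := by
  constructor
  · intro hn
    have : (Set.Iic n) ⊆ T := fun k hk => hl n hn k hk
    have h2 := Set.ncard_le_ncard this hT
    have h3 : (Set.Iic n).ncard = n + 1 := by
      rw [← Nat.card_coe_set_eq]; simp
    omega
  · intro hn
    by_contra hcon
    have : T ⊆ Set.Iio n := by
      intro k hk
      by_contra hk'
      exact hcon (hl k hk n (not_lt.1 hk'))
    have h2 := Set.ncard_le_ncard this (Set.finite_Iio n)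
    have h3 : (Set.Iio n).ncard = n := by
      rw [← Nat.card_coe_set_eq]; simp
    omega

lemma sorted_top {J : Type} [Fintype J] {a : ℕ → ℝ} (ha : Monotone a) (L : J → ℝ) (N : ℕ)
    (hJ : Fintype.card J = N + 2) {x y : J} (hxy : x ≠ y) (hyx : L y ≤ L x)
    (hlt : ∀ j, j ≠ x → j ≠ y → L j < L y)
    (h : ∀ v, v ≤ L x → Nat.card {n // a n = v} = Nat.card {j // L j = v})
    (hex : ∀ n, a n ≤ L x → ∃ j, L j = a n) : a (N + 1) - a N = L x - L y := by
  have hcard : ∀ z : J, ({z}ᶜ : Set J).ncard = N + 1 := by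
    intro z
    have := Set.ncard_add_ncard_compl {z}
    rw [Set.ncard_singleton, Nat.card_eq_fintype_card, hJ] at this
    omega
  have hcard2 : ({x, y}ᶜ : Set J).ncard = N := by
    have := Set.ncard_add_ncard_compl {x, y}
    rw [Set.ncard_pair hxy, Nat.card_eq_fintype_card, hJ] at this
    omega
  have hle : ∀ z, z ≤ L x → ∀ n, a n ≤ z ↔ n < {j | L j ≤ z}.ncard := by
    intro z hz n
    obtain ⟨h1, h2⟩ := count_aux a L (fun v => v ≤ z) (fun v hv => h v (hv.trans hz))
      (fun n hn => hex n (le_trans hn hz))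
    rw [← h2]
    exact lower_set h1 (fun n hn k hk => (ha hk).trans hn) n
  have hl : ∀ z, z ≤ L x → ∀ n, a n < z ↔ n < {j | L j < z}.ncard := by
    intro z hz n
    obtain ⟨h1, h2⟩ := count_aux a L (fun v => v < z) (fun v hv => h v (hv.le.trans hz))
      (fun n hn => hex n (hn.le.trans hz))
    rw [← h2]
    exact lower_set h1 (fun n hn k hk => (ha hk).trans_lt hn) n
  have e1 : a N = L y := by
    apply le_antisymm
    · rw [hle _ hyx]
      have : ({x}ᶜ : Set J) ⊆ {j | L j ≤ L y} := by
        intro j hj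
        by_cases hjy : j = y
        · rw [hjy]; exact le_refl (L y)
        · exact (hlt j hj hjy).le
      have := Set.ncard_le_ncard this (Set.toFinite _)
      rw [hcard] at this
      omega
    · rw [← not_lt, hl _ hyx]
      have : {j | L j < L y} ⊆ ({x, y}ᶜ : Set J) := by
        intro j hj hj'
        rcases hj' with rfl | hj'
        · exact absurd hj (not_lt.2 hyx)
        · rw [Set.mem_singleton_iff.1 hj'] at hj
          exact lt_irrefl (L y) hj
      have := Set.ncard_le_ncard this (Set.toFinite _)
      rw [hcard2] at this
      omega
  have e2 : a (N + 1) = L x := by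
    apply le_antisymm
    · rw [hle _ le_rfl]
      have : {j | L j ≤ L x} = Set.univ := by
        ext j
        simp only [Set.mem_ofPred_eq, Set.mem_univ, iff_true]
        by_cases hjx : j = x
        · rw [hjx]
        · by_cases hjy : j = y
          · rw [hjy]; exact hyx
          · exact (hlt j hjx hjy).le.trans hyx
      rw [this, Set.ncard_univ, Nat.card_eq_fintype_card, hJ]
      omega
    · rw [← not_lt, hl _ le_rfl]
      have : {j | L j < L x} ⊆ ({x}ᶜ : Set J) := by
        intro j hj hj'
        rw [Set.mem_singleton_iff.1 hj'] at hj
        exact lt_irrefl (L x) hj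
      have := Set.ncard_le_ncard this (Set.toFinite _)
      rw [hcard] at this
      omega
  rw [e1, e2]

open Classical in
lemma card_fiber {J : Type} [Fintype J] {f : J → ℝ} (hf : Function.Injective f) (v : ℝ) :
    Nat.card {i // f i = v} = if ∃ i, f i = v then 1 else 0 := by
  split_ifs with h
  · obtain ⟨i, hi⟩ := h
    rw [Nat.card_eq_one_iff_unique]
    exact ⟨⟨fun p q => Subtype.ext (hf (p.2.trans q.2.symm))⟩, ⟨⟨i, hi⟩⟩⟩
  · have : IsEmpty {i // f i = v} := ⟨fun p => h ⟨p.1, p.2⟩⟩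
    exact Nat.card_of_isEmpty

lemma win_lt {x y : ℝ} {i j : ℕ} (hij : i < j) (hx : |x - 4 * (i : ℝ) ^ 2| ≤ 1)
    (hy : |y - 4 * (j : ℝ) ^ 2| ≤ 1) : x < y := by
  have h1 := (abs_le.1 hx).2
  have h2 := (abs_le.1 hy).1
  have h3 : (i : ℝ) + 1 ≤ j := by exact_mod_cast hij
  have h4 : (0 : ℝ) ≤ i := Nat.cast_nonneg i
  nlinarith

lemma gap_eq {b β s A : ℝ} (hα : Grow (alpha b β) A) (hα' : Grow (alpha b (-β)) A) (hs : 0 ≤ s)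
    (m : ℕ) (hm : 1 ≤ m) (hsm : 8 * A * s * (1 + m) ≤ 1) {Me Mo : ℕ → ℝ} {ce co : ℕ → ℤ → ℝ}
    (hMe : ∀ j ≤ m, Sol (alpha b β) 1 s j (Me j) (ce j))
    (hMo : ∀ j ≤ m, 1 ≤ j → Sol (alpha b (-β)) (-1) s j (Mo j) (co j))
    {a : ℕ → ℝ} (ha : EnumPer (pot b β s) a) : a (2 * m) - a (2 * m - 1) = |Me m - Mo m| := by
  classical
  obtain ⟨hmono, hev, hcnt⟩ := ha
  have hpot : pot b (-β) s = pot b β s := by funext x; unfold pot; ring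
  have hsq : (-β * s) ^ 2 = (β * s) ^ 2 := by ring
  -- description of the multiplicity
  have desc : ∀ lam : ℝ, lam + 2 * (β * s) ^ 2 ≤ 4 * (m : ℝ) ^ 2 + 1 →
      (perMult (pot b β s) lam = (if ∃ j ≤ m, lam + 2 * (β * s) ^ 2 = Me j then 1 else 0) +
        (if ∃ j ≤ m, 1 ≤ j ∧ lam + 2 * (β * s) ^ 2 = Mo j then 1 else 0)) ∧
      ∀ f, IsPerEF (pot b β s) lam f → f ≠ 0 → (∃ j ≤ m, lam + 2 * (β * s) ^ 2 = Me j) ∨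
        ∃ j ≤ m, 1 ≤ j ∧ lam + 2 * (β * s) ^ 2 = Mo j := by
    intro lam hlam
    obtain ⟨g, g1, g2, g3, g4⟩ := sector_desc (lam := lam) (Or.inl ⟨rfl, rfl⟩ : Sector 0 1) hα hs m hsm
      (fun j hj _ => hMe j hj) hlam
    obtain ⟨h, h1, h2, h3, h4⟩ := sector_desc (lam := lam)
      (Or.inr ⟨rfl, rfl⟩ : Sector (π / 2) (-1)) hα' hs m hsm
      (M := Mo) (c := co) (fun j hj hj0 => hMo j hj (by
        rcases Nat.eq_zero_or_pos j with h | h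
        · have := hj0 h; norm_num at this
        · exact h)) (by rw [hsq]; exact hlam)
    rw [hpot] at h1 h4
    rw [hsq] at h3
    have g3' : g ≠ 0 ↔ ∃ j ≤ m, lam + 2 * (β * s) ^ 2 = Me j := by
      rw [g3]; simp
    have h3' : h ≠ 0 ↔ ∃ j ≤ m, 1 ≤ j ∧ lam + 2 * (β * s) ^ 2 = Mo j := by
      rw [h3]
      have : ∀ j : ℕ, (j = 0 → (-1 : ℝ) = 1) ↔ 1 ≤ j := by
        intro j
        constructor
        · intro hj
          rcases Nat.eq_zero_or_pos j with h | h
          · have := hj h; norm_num at this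
          · exact h
        · intro hj h0; omega
      simp only [this]
    obtain ⟨k1, k2⟩ := perMult_eq g1 h1 g2 h2 g4 h4
    simp only [g3', h3'] at k1 k2
    exact ⟨k1, k2⟩
  set Le : Fin (m + 1) → ℝ := fun j => Me j - 2 * (β * s) ^ 2 with hLe
  set Lo : Fin m → ℝ := fun j => Mo (j + 1) - 2 * (β * s) ^ 2 with hLo
  set L : Fin (m + 1) ⊕ Fin m → ℝ := Sum.elim Le Lo with hL
  have we : ∀ j ≤ m, |Me j - 4 * (j : ℝ) ^ 2| ≤ 1 := fun j hj => (hMe j hj).1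
  have wo : ∀ j ≤ m, 1 ≤ j → |Mo j - 4 * (j : ℝ) ^ 2| ≤ 1 := fun j hj h1 => (hMo j hj h1).1
  have injE : Function.Injective Le := by
    intro i j hij
    simp only [hLe, sub_left_inj] at hij
    have hi := we i (by omega)
    have hj := we j (by omega)
    by_contra hne
    have : (i : ℕ) ≠ j := fun h => hne (Fin.ext h)
    rcases lt_or_gt_of_ne this with h | h
    · have := win_lt h hi hj; linarith
    · have := win_lt h hj hi; linarith
  have injO : Function.Injective Lo := by
    intro i j hij
    simp only [hLo, sub_left_inj] at hij
    have hi := wo (i + 1) (by omega) (by omega)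
    have hj := wo (j + 1) (by omega) (by omega)
    by_contra hne
    have : (i : ℕ) ≠ j := fun h => hne (Fin.ext h)
    rcases lt_or_gt_of_ne this with h | h
    · have := win_lt (by omega) hi hj; linarith
    · have := win_lt (by omega) hj hi; linarith
  have exE : ∀ v, (∃ i, Le i = v) ↔ ∃ j ≤ m, v + 2 * (β * s) ^ 2 = Me j := by
    intro v
    constructor
    · rintro ⟨i, rfl⟩
      exact ⟨i, by omega, by simp only [hLe]; ring⟩
    · rintro ⟨j, hj, h⟩
      exact ⟨⟨j, by omega⟩, by simp only [hLe]; linarith⟩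
  have exO : ∀ v, (∃ i, Lo i = v) ↔ ∃ j ≤ m, 1 ≤ j ∧ v + 2 * (β * s) ^ 2 = Mo j := by
    intro v
    constructor
    · rintro ⟨i, rfl⟩
      exact ⟨i + 1, by omega, by omega, by simp only [hLo]; ring⟩
    · rintro ⟨j, hj, hj1, h⟩
      refine ⟨⟨j - 1, by omega⟩, ?_⟩
      simp only [hLo]
      rw [Nat.sub_add_cancel hj1]; linarith
  have hK : ∀ v, v + 2 * (β * s) ^ 2 ≤ 4 * (m : ℝ) ^ 2 + 1 →
      Nat.card {n // a n = v} = Nat.card {j // L j = v} := by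
    intro v hv
    rw [hcnt, (desc v hv).1, Nat.card_congr (Equiv.subtypeSum (p := fun j => L j = v)), Nat.card_sum]
    have e1 : Nat.card {i // L (Sum.inl i) = v} = Nat.card {i // Le i = v} := rfl
    have e2 : Nat.card {i // L (Sum.inr i) = v} = Nat.card {i // Lo i = v} := rfl
    rw [e1, e2, card_fiber injE, card_fiber injO]
    simp only [exE, exO]
  have hX : ∀ n, a n + 2 * (β * s) ^ 2 ≤ 4 * (m : ℝ) ^ 2 + 1 → ∃ j, L j = a n := by
    intro n hn
    obtain ⟨f, f0, hf⟩ := hev n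
    rcases (desc _ hn).2 f hf f0 with h | h
    · obtain ⟨i, hi⟩ := (exE _).2 h
      exact ⟨Sum.inl i, hi⟩
    · obtain ⟨i, hi⟩ := (exO _).2 h
      exact ⟨Sum.inr i, hi⟩
  set x : Fin (m + 1) ⊕ Fin m := Sum.inl ⟨m, by omega⟩ with hx
  set y : Fin (m + 1) ⊕ Fin m := Sum.inr ⟨m - 1, by omega⟩ with hy
  have hLx : L x = Me m - 2 * (β * s) ^ 2 := rfl
  have hLy : L y = Mo m - 2 * (β * s) ^ 2 := by
    change Mo (m - 1 + 1) - 2 * (β * s) ^ 2 = _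
    rw [Nat.sub_add_cancel hm]
  have hsmall : ∀ j, j ≠ x → j ≠ y → L j < L x ∧ L j < L y := by
    intro j hjx hjy
    rw [hLx, hLy]
    have hem := we m le_rfl
    have hom := wo m le_rfl hm
    rcases j with i | i
    · have hi : (i : ℕ) < m := by
        have h1 := i.2
        have h2 : (i : ℕ) ≠ m := fun h => hjx (by rw [hx]; congr 1; exact Fin.ext h)
        omega
      have hi' := we i hi.le
      change Me i - _ < _ ∧ Me i - _ < _
      have := win_lt hi hi' hem
      have := win_lt hi hi' hom
      constructor <;> linarith
    · have hi : (i : ℕ) + 1 < m := by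
        have h1 := i.2
        have h2 : (i : ℕ) ≠ m - 1 := fun h => hjy (by rw [hy]; congr 1; exact Fin.ext h)
        omega
      have hi' := wo (i + 1) hi.le (by omega)
      change Mo (i + 1) - _ < _ ∧ Mo (i + 1) - _ < _
      have := win_lt hi hi' hem
      have := win_lt hi hi' hom
      constructor <;> linarith
  have hJ : Fintype.card (Fin (m + 1) ⊕ Fin m) = (2 * m - 1) + 2 := by
    simp; omega
  have hux : L x + 2 * (β * s) ^ 2 ≤ 4 * (m : ℝ) ^ 2 + 1 := by
    have := (abs_le.1 (we m le_rfl)).2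
    rw [hLx]; linarith
  have huy : L y + 2 * (β * s) ^ 2 ≤ 4 * (m : ℝ) ^ 2 + 1 := by
    have := (abs_le.1 (wo m le_rfl hm)).2
    rw [hLy]; linarith
  have hxy : x ≠ y := by simp [hx, hy]
  have e : 2 * m - 1 + 1 = 2 * m := by omega
  rcases le_total (L y) (L x) with hle | hle
  · have := sorted_top hmono L (2 * m - 1) hJ hxy hle (fun j h1 h2 => (hsmall j h1 h2).2)
      (fun v hv => hK v (by linarith)) (fun n hn => hX n (by linarith))
    rw [e] at this
    rw [this, abs_of_nonneg (by rw [hLx, hLy] at hle; linarith), hLx, hLy]; ring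
  · have := sorted_top hmono L (2 * m - 1) hJ hxy.symm hle (fun j h1 h2 => (hsmall j h2 h1).1)
      (fun v hv => hK v (by linarith)) (fun n hn => hX n (by linarith))
    rw [e] at this
    rw [this, abs_of_nonpos (by rw [hLx, hLy] at hle; linarith), hLx, hLy]; ring

lemma alpha_grow (b β : ℝ) : Grow (alpha b β) (|b| + 4 * |β| + 1) := by
  refine ⟨by positivity, fun k => ?_⟩
  unfold alpha
  have h1 : |b / 2 + 4 * β * ((k : ℝ) - 1 / 2)| ≤ |b| / 2 + 4 * |β| * (|(k : ℝ)| + 1 / 2) := by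
    refine (abs_add_le _ _).trans ?_
    rw [abs_div, abs_mul, abs_mul, abs_two, abs_of_nonneg (by norm_num : (0 : ℝ) ≤ 4)]
    have : |(k : ℝ) - 1 / 2| ≤ |(k : ℝ)| + 1 / 2 := by
      refine (abs_sub _ _).trans ?_
      norm_num
    have := mul_le_mul_of_nonneg_left this (by positivity : 0 ≤ 4 * |β|)
    linarith
  have h2 := abs_nonneg b
  have h3 := abs_nonneg β
  have h4 := abs_nonneg (k : ℝ)
  refine h1.trans ?_
  nlinarith [mul_nonneg h2 h4, mul_nonneg h3 h4]

open Filter Topology Asymptotics in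
lemma core_asymp (b β : ℝ) (m : ℕ) (hm : 1 ≤ m) :
    ∃ C > 0, ∃ s0 > 0, ∀ s : ℝ, 0 < s → s < s0 → ∀ a : ℕ → ℝ, EnumPer (pot b β s) a →
      |(a (2 * m) - a (2 * m - 1)) -
        |8 * (∏ k ∈ Finset.Icc 1 m, (alpha b β k * alpha b β (1 - k))) /
        (2 ^ (4 * m) * (((2 * m - 1).factorial : ℝ)) ^ 2)| * s ^ (2 * m)| ≤ C * s ^ (2 * m + 2) := by
  set A : ℝ := |b| + 4 * |β| + 1 with hA
  have hα : Grow (alpha b β) A := alpha_grow b β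
  have hα' : Grow (alpha b (-β)) A := by
    have := alpha_grow b (-β)
    rwa [abs_neg] at this
  have hαα : ∀ k, alpha b (-β) k = alpha b β (1 - k) := by
    intro k; unfold alpha; push_cast; ring
  have hA0 := hα.1
  have exE : ∀ (s : ℝ) (j : ℕ), ∃ (μ : ℝ) (c : ℤ → ℝ), 0 ≤ s → 8 * A * s * (1 + j) ≤ 1 →
      Sol (alpha b β) 1 s j μ c := by
    intro s j
    by_cases h : 0 ≤ s ∧ 8 * A * s * (1 + j) ≤ 1
    · obtain ⟨μ, c, h1⟩ := exists_sol hα h.1 j h.2 (σ := 1) (by norm_num) (fun _ => rfl)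
      exact ⟨μ, c, fun _ _ => h1⟩
    · exact ⟨0, 0, fun h1 h2 => absurd ⟨h1, h2⟩ h⟩
  have exO : ∀ (s : ℝ) (j : ℕ), ∃ (μ : ℝ) (c : ℤ → ℝ), 0 ≤ s → 8 * A * s * (1 + j) ≤ 1 → 1 ≤ j →
      Sol (alpha b (-β)) (-1) s j μ c := by
    intro s j
    by_cases h : 0 ≤ s ∧ 8 * A * s * (1 + j) ≤ 1 ∧ 1 ≤ j
    · obtain ⟨μ, c, h1⟩ := exists_sol hα' h.1 j h.2.1 (σ := -1) (by norm_num)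
        (fun h0 => by have := h.2.2; omega)
      exact ⟨μ, c, fun _ _ _ => h1⟩
    · exact ⟨0, 0, fun h1 h2 h3 => absurd ⟨h1, h2, h3⟩ h⟩
  choose Me ce hMe using exE
  choose Mo co hMo using exO
  set r : ℝ := 1 / (8 * A * (1 + m)) with hr
  have hr0 : 0 < r := by positivity
  have hsm : ∀ s, s < r → ∀ j ≤ m, 0 ≤ s → 8 * A * s * (1 + (j : ℝ)) ≤ 1 := by
    intro s hs j hj hs0
    have hj' : (j : ℝ) ≤ m := by exact_mod_cast hj
    have h1 : s * (8 * A * (1 + m)) < 1 := by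
      rw [hr, lt_div_iff₀ (by positivity)] at hs; exact hs
    have h2 : 8 * A * s * (1 + (j : ℝ)) ≤ 8 * A * s * (1 + m) :=
      mul_le_mul_of_nonneg_left (by linarith) (by positivity)
    linarith
  have hnear : ∀ᶠ s in 𝓝[>] (0 : ℝ), 0 < s ∧ s < r := Ioo_mem_nhdsGT hr0
  have hO := gap_asymp hα hα' hαα m hm (μ := fun s => Me s m) (ν := fun s => Mo s m)
    (c := fun s => ce s m) (d := fun s => co s m)
    (hnear.mono fun s hs => hMe s m hs.1.le (hsm s hs.2 m le_rfl hs.1.le))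
    (hnear.mono fun s hs => hMo s m hs.1.le (hsm s hs.2 m le_rfl hs.1.le) hm)
  rw [lead_const _ _ hαα m hm] at hO
  obtain ⟨C, hC, hO⟩ := hO.exists_pos
  have hO' := hO.bound
  obtain ⟨ε, hε, hball⟩ := (mem_nhdsGT_iff_exists_Ioo_subset).1 (hO'.and hnear)
  refine ⟨C, hC, ε, hε, fun s hs hsε a ha => ?_⟩
  obtain ⟨h1, -, h2⟩ := hball ⟨hs, hsε⟩
  have hg := gap_eq hα hα' hs.le m hm (hsm s h2 m le_rfl hs.le)
    (fun j hj => hMe s j hs.le (hsm s h2 j hj hs.le))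
    (fun j hj h1 => hMo s j hs.le (hsm s h2 j hj hs.le) h1) ha
  rw [hg]
  rw [Real.norm_eq_abs, Real.norm_eq_abs, abs_of_pos (pow_pos hs (2 * m + 2))] at h1
  refine le_trans ?_ h1
  have := abs_abs_sub_abs_le (Me s m - Mo s m)
    (8 * (∏ k ∈ Finset.Icc 1 m, (alpha b β k * alpha b β (1 - k))) /
        (2 ^ (4 * m) * (((2 * m - 1).factorial : ℝ)) ^ 2) * s ^ (2 * m))
  rwa [abs_mul _ (s ^ (2 * m)), abs_of_pos (pow_pos hs (2 * m))] at this

end Aux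

theorem stmt6 (b c m1 : ℝ) (hc : c < 0) (hm1 : 0 < m1)
    (m : ℕ) (hm : 2 ≤ m) (lamP lamM : ℝ → ℕ → ℝ)
    (hP : ∀ q : ℝ, 0 < q →
      EnumPer (fun x => b * q ^ m1 * Real.cos (2 * x) + c * q ^ (2 * m1) * Real.cos (4 * x))
        (lamP q))
    (hM : ∀ q : ℝ, 0 < q →
      EnumSemi (fun x => b * q ^ m1 * Real.cos (2 * x) + c * q ^ (2 * m1) * Real.cos (4 * x))
        (lamM q)) :
    ∃ C > 0, ∃ δ > 0, ∀ q : ℝ, 0 < q → q < δ →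
      |gapLen (lamP q) (lamM q) (2 * m) -
          8 * |∏ k ∈ Finset.Icc 1 m, ((b / 2) ^ 2 + 8 * c * ((k : ℝ) - 1 / 2) ^ 2)| *
            q ^ (2 * m1 * (m : ℝ)) / (2 ^ (4 * m) * (((2 * m - 1).factorial : ℝ)) ^ 2)| ≤
        C * q ^ (2 * m1 * ((m : ℝ) + 1)) := by
  set β : ℝ := Real.sqrt (-c / 2) with hβ
  have hβ2 : β ^ 2 = -c / 2 := Real.sq_sqrt (by linarith)
  obtain ⟨C, hC, s0, hs0, hmain⟩ := core_asymp b β m (by omega)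
  refine ⟨C, hC, s0 ^ (1 / m1), Real.rpow_pos_of_pos hs0 _, fun q hq hqδ => ?_⟩
  have hs : 0 < q ^ m1 := Real.rpow_pos_of_pos hq _
  have hsl : q ^ m1 < s0 := by
    have := Real.rpow_lt_rpow hq.le hqδ hm1
    rwa [← Real.rpow_mul hs0.le, one_div_mul_cancel hm1.ne', Real.rpow_one] at this
  have e0 : q ^ (2 * m1) = (q ^ m1) ^ 2 := by
    rw [← Real.rpow_natCast, ← Real.rpow_mul hq.le]; congr 1; push_cast; ring
  have e1 : q ^ (2 * m1 * (m : ℝ)) = (q ^ m1) ^ (2 * m) := by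
    rw [← Real.rpow_natCast, ← Real.rpow_mul hq.le]; congr 1; push_cast; ring
  have e2 : q ^ (2 * m1 * ((m : ℝ) + 1)) = (q ^ m1) ^ (2 * m + 2) := by
    rw [← Real.rpow_natCast, ← Real.rpow_mul hq.le]; congr 1; push_cast; ring
  have hpot : (fun x => b * q ^ m1 * Real.cos (2 * x) + c * q ^ (2 * m1) * Real.cos (4 * x)) =
      pot b β (q ^ m1) := by
    funext x
    rw [e0]; unfold pot
    linear_combination (-2 * (q ^ m1) ^ 2 * Real.cos (4 * x)) * (-hβ2)
  have hp := hP q hq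
  rw [hpot] at hp
  have hfin := hmain (q ^ m1) hs hsl (lamP q) hp
  have hgap : gapLen (lamP q) (lamM q) (2 * m) = lamP q (2 * m) - lamP q (2 * m - 1) := by
    unfold gapLen
    rw [if_neg (by simp)]
  have hprod : ∏ k ∈ Finset.Icc 1 m, ((b / 2) ^ 2 + 8 * c * ((k : ℝ) - 1 / 2) ^ 2) =
      ∏ k ∈ Finset.Icc 1 m, (alpha b β (k : ℤ) * alpha b β (1 - (k : ℤ))) := by
    refine Finset.prod_congr rfl fun k _ => ?_
    unfold alpha
    push_cast
    linear_combination (16 * ((k : ℝ) - 1 / 2) ^ 2) * hβ2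
  rw [hgap, hprod, e1, e2]
  have hD : (0 : ℝ) < 2 ^ (4 * m) * (((2 * m - 1).factorial : ℝ)) ^ 2 := by positivity
  rw [abs_div, abs_mul, abs_of_pos hD, abs_of_pos (by norm_num : (0 : ℝ) < 8)] at hfin
  convert hfin using 3
  ring
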